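/- arXiv:1706.07645 — 8 statements merged into one kernel-verified Lean document; each statement's English description precedes it below -/
import Mathlib

section
/- Let k be a field equipped with an 𝔽_q[t]-algebra structure, let a ∈ 𝔽_q[t] be monic and nonconstant, and let b ∈ 𝔽_q[t]. Then the Carlitz polynomial Φ^C_a(Z) divides Φ^C_b(Z) in k[Z] if and only if a divides b in 𝔽_q[t]. -/
open Polynomial

/-- `Φ` is the Carlitz module map `a ↦ Φ^C_a` over `𝔽_q[t]`: it is `𝔽_q`-linear,
turns multiplication into composition, sends `1` to `Z` and `t` to `t·Z + Z^q`. -/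
def IsCarlitzHom {Fq : Type*} [Field Fq] (q : ℕ)
    (Φ : Fq[X] → Polynomial (Fq[X])) : Prop :=
  (∀ a b : Fq[X], Φ (a + b) = Φ a + Φ b) ∧
  (∀ (c : Fq) (a : Fq[X]), Φ (Polynomial.C c * a) = Polynomial.C (Polynomial.C c) * Φ a) ∧
  (∀ a b : Fq[X], Φ (a * b) = (Φ a).comp (Φ b)) ∧
  Φ 1 = Polynomial.X ∧
  Φ Polynomial.X = Polynomial.C Polynomial.X * Polynomial.X + Polynomial.X ^ q

/-! Since `Φ_{ca} = Φ_c ∘ Φ_a` and `Z ∣ Φ_c(Z)`, divisibility `a ∣ b` passes to Carlitz polynomials.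
Conversely `Φ_a` has degree `q ^ deg a` and the leading coefficient of `a`, a unit that survives in
every nontrivial `𝔽_q[t]`-algebra. If `r` is the remainder of `b` modulo `a`, then `Φ_a ∣ Φ_b` gives
`Φ_a ∣ Φ_r`, and comparing degrees forces `r = 0`. -/

theorem natDegree_le_of_dvd_of_isUnit_leadingCoeff {R : Type*} [Semiring R] {f g : R[X]}
    (hf : IsUnit f.leadingCoeff) (hg : g ≠ 0) (h : f ∣ g) : f.natDegree ≤ g.natDegree := by
  obtain ⟨s, rfl⟩ := h
  have hlead : f.leadingCoeff * s.leadingCoeff ≠ 0 :=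
    hf.mul_right_eq_zero.not.mpr (leadingCoeff_ne_zero.mpr (right_ne_zero_of_mul hg))
  rw [natDegree_mul' hlead]
  exact Nat.le_add_right _ _

namespace IsCarlitzHom

variable {F : Type*} [Field F] {q : ℕ} {Φ : F[X] → F[X][X]}

section Divisibility

variable (hΦ : IsCarlitzHom q Φ)
include hΦ

theorem apply_add (a b : F[X]) : Φ (a + b) = Φ a + Φ b := hΦ.1 a b

theorem apply_mul (a b : F[X]) : Φ (a * b) = (Φ a).comp (Φ b) := hΦ.2.2.1 a b

theorem apply_X : Φ X = C X * X + X ^ q := hΦ.2.2.2.2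

theorem apply_C (c : F) : Φ (C c) = C (C c) * X := by
  obtain ⟨-, apply_C_mul, -, apply_one, -⟩ := hΦ
  rw [← mul_one (C c), apply_C_mul, apply_one, mul_one]

theorem apply_zero : Φ 0 = 0 := by
  simpa only [C_0, zero_mul] using hΦ.apply_C 0

theorem X_dvd_apply (a : F[X]) : X ∣ Φ a := by
  have hcomp : (Φ a).comp 0 = 0 := by rw [← hΦ.apply_zero, ← hΦ.apply_mul, mul_zero]
  rwa [X_dvd_iff, coeff_zero_eq_eval_zero, ← C_eq_zero, ← comp_C, C_0]

theorem apply_dvd_apply {a b : F[X]} (h : a ∣ b) : Φ a ∣ Φ b := by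
  obtain ⟨c, rfl⟩ := h
  obtain ⟨g, hg⟩ := hΦ.X_dvd_apply c
  rw [mul_comm, hΦ.apply_mul, hg, mul_comp, X_comp]
  exact dvd_mul_right _ _

theorem map_apply_dvd_map_apply_mod {R : Type*} [CommRing R] {f : F[X] →+* R} {a b : F[X]}
    (h : (Φ a).map f ∣ (Φ b).map f) : (Φ a).map f ∣ (Φ (b % a)).map f := by
  have hmultiple : (Φ a).map f ∣ (Φ (a * (b / a))).map f :=
    Polynomial.map_dvd f (hΦ.apply_dvd_apply (dvd_mul_right _ _))
  rwa [← EuclideanDomain.mod_add_div b a, hΦ.apply_add, Polynomial.map_add,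
    dvd_add_left hmultiple] at h

end Divisibility

section Degree

variable (hΦ : IsCarlitzHom q Φ) (hq : 1 < q)
include hΦ hq

theorem natDegree_apply_X : (Φ X).natDegree = q := by
  rw [hΦ.apply_X, natDegree_add_eq_right_of_natDegree_lt, natDegree_X_pow]
  rwa [natDegree_C_mul_X _ X_ne_zero, natDegree_X_pow]

theorem monic_apply_X : (Φ X).Monic := by
  rw [hΦ.apply_X, add_comm]
  refine monic_X_pow_add ((degree_C_mul_X_le X).trans_lt ?_)
  exact_mod_cast hq

theorem natDegree_apply {a : F[X]} (ha : a ≠ 0) : (Φ a).natDegree = q ^ a.natDegree := by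
  induction a using recOnHorner with
  | M0 => contradiction
  | MC a c hcoeff hc ih =>
    rcases eq_or_ne a 0 with rfl | ha'
    · rw [zero_add, hΦ.apply_C, natDegree_C_mul_X _ (C_ne_zero.mpr hc), natDegree_C, pow_zero]
    · have hpos : 0 < a.degree :=
        degree_pos_of_root ha' (zero_isRoot_of_coeff_zero_eq_zero hcoeff)
      have hlt : (Φ (C c)).natDegree < (Φ a).natDegree := by
        rw [hΦ.apply_C, natDegree_C_mul_X _ (C_ne_zero.mpr hc), ih ha']
        exact Nat.one_lt_pow (natDegree_pos_iff_degree_pos.mpr hpos).ne' hq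
      rw [hΦ.apply_add, natDegree_add_eq_left_of_natDegree_lt hlt, ih ha', natDegree_add_C]
  | MX a ha' ih =>
    rw [hΦ.apply_mul, natDegree_comp, ih ha', hΦ.natDegree_apply_X hq, natDegree_mul_X ha',
      pow_succ]

theorem leadingCoeff_apply (a : F[X]) : (Φ a).leadingCoeff = C a.leadingCoeff := by
  induction a using recOnHorner with
  | M0 => rw [hΦ.apply_zero, leadingCoeff_zero, leadingCoeff_zero, C_0]
  | MC a c hcoeff hc ih =>
    rcases eq_or_ne a 0 with rfl | ha
    · rw [zero_add, hΦ.apply_C, leadingCoeff_C_mul_X, leadingCoeff_C]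
    · have hpos : 0 < a.degree :=
        degree_pos_of_root ha (zero_isRoot_of_coeff_zero_eq_zero hcoeff)
      have hlt : (Φ (C c)).natDegree < (Φ a).natDegree := by
        rw [hΦ.natDegree_apply hq (C_ne_zero.mpr hc), hΦ.natDegree_apply hq ha, natDegree_C]
        exact Nat.pow_lt_pow_right hq (natDegree_pos_iff_degree_pos.mpr hpos)
      rw [hΦ.apply_add, leadingCoeff_add_of_degree_lt' (degree_lt_degree hlt), ih,
        leadingCoeff_add_of_degree_lt' (degree_C_le.trans_lt hpos)]
  | MX a _ ih =>
    have hdeg : (Φ X).natDegree ≠ 0 := by rw [hΦ.natDegree_apply_X hq]; omega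
    rw [hΦ.apply_mul, leadingCoeff_comp hdeg, hΦ.monic_apply_X hq, one_pow, mul_one, ih,
      leadingCoeff_mul_X]

theorem isUnit_leadingCoeff_apply {a : F[X]} (ha : a ≠ 0) : IsUnit (Φ a).leadingCoeff := by
  rw [hΦ.leadingCoeff_apply hq, isUnit_C, isUnit_iff_ne_zero]
  exact leadingCoeff_ne_zero.mpr ha

variable {R : Type*} [CommRing R] [Nontrivial R] (f : F[X] →+* R)

theorem natDegree_map_apply {a : F[X]} (ha : a ≠ 0) :
    ((Φ a).map f).natDegree = q ^ a.natDegree := by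
  rw [natDegree_map_eq_of_isUnit_leadingCoeff f (hΦ.isUnit_leadingCoeff_apply hq ha),
    hΦ.natDegree_apply hq ha]

theorem isUnit_leadingCoeff_map_apply {a : F[X]} (ha : a ≠ 0) :
    IsUnit ((Φ a).map f).leadingCoeff := by
  have hunit := hΦ.isUnit_leadingCoeff_apply hq ha
  rw [leadingCoeff_map_eq_of_isUnit_leadingCoeff f hunit]
  exact hunit.map f

theorem map_apply_eq_zero_iff {a : F[X]} : (Φ a).map f = 0 ↔ a = 0 := by
  refine ⟨fun h ↦ ?_, fun h ↦ by rw [h, hΦ.apply_zero, Polynomial.map_zero]⟩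
  by_contra ha
  exact (hΦ.isUnit_leadingCoeff_map_apply hq f ha).ne_zero (leadingCoeff_eq_zero.mpr h)

theorem degree_le_degree_of_map_apply_dvd {a b : F[X]} (hb : b ≠ 0)
    (h : (Φ a).map f ∣ (Φ b).map f) : a.degree ≤ b.degree := by
  rcases eq_or_ne a 0 with rfl | ha
  · exact bot_le
  have hpow := natDegree_le_of_dvd_of_isUnit_leadingCoeff
    (hΦ.isUnit_leadingCoeff_map_apply hq f ha) ((hΦ.map_apply_eq_zero_iff hq f).not.mpr hb) h
  rw [hΦ.natDegree_map_apply hq f ha, hΦ.natDegree_map_apply hq f hb,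
    Nat.pow_le_pow_iff_right hq] at hpow
  rwa [degree_eq_natDegree ha, degree_eq_natDegree hb, Nat.cast_le]

end Degree

end IsCarlitzHom

theorem carlitz_dvd_iff_general {F : Type*} [Field F] {q : ℕ} (hq : 1 < q)
    {Φ : F[X] → F[X][X]} (hΦ : IsCarlitzHom q Φ) {R : Type*} [CommRing R] [Nontrivial R]
    (f : F[X] →+* R) (a b : F[X]) : (Φ a).map f ∣ (Φ b).map f ↔ a ∣ b := by
  refine ⟨fun h ↦ ?_, fun h ↦ Polynomial.map_dvd f (hΦ.apply_dvd_apply h)⟩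
  rcases eq_or_ne a 0 with rfl | ha
  · rwa [hΦ.apply_zero, Polynomial.map_zero, zero_dvd_iff, hΦ.map_apply_eq_zero_iff hq f,
      ← zero_dvd_iff] at h
  rw [← EuclideanDomain.mod_eq_zero]
  by_contra hr
  have hle : a.degree ≤ (b % a).degree :=
    hΦ.degree_le_degree_of_map_apply_dvd hq f hr (hΦ.map_apply_dvd_map_apply_mod h)
  exact hle.not_gt (EuclideanDomain.mod_lt b ha)

/-- over any field `k` which is an `𝔽_q[t]`-algebra, for `a` monic nonconstant
and any `b`, the Carlitz polynomial `Φ^C_a(Z)` divides `Φ^C_b(Z)` in `k[Z]` iff `a ∣ b`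
in `𝔽_q[t]`. -/
theorem carlitz_dvd_iff {Fq : Type*} [Field Fq] [Fintype Fq]
    (q : ℕ) (hq : q = Fintype.card Fq)
    (Φ : Fq[X] → Polynomial (Fq[X])) (hΦ : IsCarlitzHom q Φ)
    {k : Type*} [Field k] [Algebra Fq[X] k]
    (a b : Fq[X]) (ha : a.Monic) (hdeg : 1 ≤ a.natDegree) :
    (Φ a).map (algebraMap Fq[X] k) ∣ (Φ b).map (algebraMap Fq[X] k) ↔ a ∣ b :=
  carlitz_dvd_iff_general (hq ▸ Fintype.one_lt_card) hΦ (algebraMap Fq[X] k) a b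
end

section
/- Let ℘ ∈ 𝔽_q[t] be a monic irreducible polynomial of degree d and let n ≥ 1. Then the exponent of the unit group (𝔽_q[t]/(℘^n))^× equals (q^d − 1)·p^{l_p(n)}, where l_p(n) = min{N ∈ ℤ_{≥0} : p^N ≥ n}. -/
open Polynomial

/-!
Reduction modulo `P` maps the units of `R ⧸ P ^ n` onto the multiplicative group of the residue
field, which is cyclic of order `q ^ d - 1`, prime to `p`. The kernel is `1 + P / P ^ n`; since
`(1 + a) ^ p ^ N = 1 + a ^ p ^ N` in characteristic `p`, it has exponent dividing `p ^ N` exactly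
when `a ^ p ^ N ∈ P ^ n` for all `a ∈ P`, which an element of `P` outside `P ^ 2` shows to mean
`n ≤ p ^ N`. As the two exponents are coprime, their product is the exponent of the whole group.
-/

section Group

variable {G H : Type*} [Group G] [Group H]

lemma exponent_dvd_exponent_ker_mul_exponent (f : G →* H) :
    Monoid.exponent G ∣ Monoid.exponent f.ker * Monoid.exponent H := by
  refine Monoid.exponent_dvd_of_forall_pow_eq_one fun g ↦ ?_
  have hg : g ^ Monoid.exponent H ∈ f.ker := by
    rw [MonoidHom.mem_ker, map_pow, Monoid.pow_exponent_eq_one]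
  rw [mul_comm, pow_mul]
  exact congrArg Subtype.val (Monoid.pow_exponent_eq_one (⟨_, hg⟩ : f.ker))

lemma exponent_eq_exponent_ker_mul_exponent {f : G →* H} (hf : Function.Surjective f)
    (hcop : (Monoid.exponent f.ker).Coprime (Monoid.exponent H)) :
    Monoid.exponent G = Monoid.exponent f.ker * Monoid.exponent H :=
  Nat.dvd_antisymm (exponent_dvd_exponent_ker_mul_exponent f)
    (hcop.mul_dvd_of_dvd_of_dvd (Monoid.exponent_submonoid_dvd f.ker.toSubmonoid)
      (MonoidHom.exponent_dvd hf))

end Group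

section Nat

lemma eq_pow_clog_of_forall_dvd_pow_iff {p m n : ℕ} (hp : p.Prime)
    (h : ∀ N, m ∣ p ^ N ↔ n ≤ p ^ N) : m = p ^ Nat.clog p n := by
  obtain ⟨k, hk, rfl⟩ := (Nat.dvd_prime_pow hp).1 ((h _).2 (Nat.le_pow_clog hp.one_lt n))
  rw [hk.antisymm (Nat.clog_le_of_le_pow ((h k).1 dvd_rfl))]

lemma sInf_setOf_le_pow_eq_clog {b : ℕ} (hb : 1 < b) (n : ℕ) :
    sInf {N : ℕ | n ≤ b ^ N} = Nat.clog b n := by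
  simp only [← Nat.clog_le_iff_le_pow hb]
  exact csInf_Ici

end Nat

section FiniteField

variable (K : Type*) [Field K] [Finite K]

lemma exponent_units_eq_natCard_sub_one : Monoid.exponent Kˣ = Nat.card K - 1 := by
  rw [IsCyclic.exponent_eq_card, Nat.card_units]

lemma coprime_char_natCard_sub_one (p : ℕ) [CharP K p] : p.Coprime (Nat.card K - 1) := by
  have hdvd : p ∣ Nat.card K := by
    have := Fintype.ofFinite K
    rw [← CharP.cast_eq_zero_iff K p, Nat.card_eq_fintype_card, Nat.cast_card_eq_zero]
  refine Nat.Coprime.coprime_dvd_left hdvd ?_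
  exact (Nat.coprime_self_sub_right Nat.card_pos).2 (Nat.coprime_one_right _)

end FiniteField

section NilKernel

variable {A B : Type*} [CommRing A] [CommRing B] {f : A →+* B}

lemma isLocalHom_of_ker_nil (hf : Function.Surjective f)
    (hnil : ∀ a ∈ RingHom.ker f, IsNilpotent a) : IsLocalHom f where
  map_nonunit a ha := by
    obtain ⟨b, hb⟩ := hf ↑ha.unit⁻¹
    have hker : a * b - 1 ∈ RingHom.ker f := by
      rw [RingHom.mem_ker, map_sub, map_mul, map_one, hb, ha.mul_val_inv, sub_self]
    have hab : IsUnit (a * b) := by simpa using (hnil _ hker).isUnit_add_one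
    exact isUnit_of_mul_isUnit_left hab

lemma mem_ker_unitsMap_iff {u : Aˣ} :
    u ∈ (Units.map (f : A →* B)).ker ↔ (u : A) - 1 ∈ RingHom.ker f := by
  rw [MonoidHom.mem_ker, Units.ext_iff, RingHom.mem_ker, map_sub, map_one, sub_eq_zero]
  rfl

lemma units_pow_char_pow_eq_one_iff (p : ℕ) [ExpChar A p] (N : ℕ) {u : Aˣ} :
    u ^ p ^ N = 1 ↔ ((u : A) - 1) ^ p ^ N = 0 := by
  rw [sub_pow_expChar_pow, one_pow, sub_eq_zero, Units.ext_iff, Units.val_pow_eq_pow_val,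
    Units.val_one]

lemma exponent_ker_unitsMap_dvd_iff (p : ℕ) [ExpChar A p]
    (hnil : ∀ a ∈ RingHom.ker f, IsNilpotent a) (N : ℕ) :
    Monoid.exponent (Units.map (f : A →* B)).ker ∣ p ^ N ↔
      ∀ a ∈ RingHom.ker f, a ^ p ^ N = 0 := by
  rw [Monoid.exponent_dvd_iff_forall_pow_eq_one]
  constructor
  · intro h a ha
    obtain ⟨u, hu⟩ := (hnil a ha).isUnit_add_one
    have hsub : (u : A) - 1 = a := by rw [hu, add_sub_cancel_right]
    have hmem : u ∈ (Units.map (f : A →* B)).ker := mem_ker_unitsMap_iff.2 (hsub ▸ ha)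
    rw [← hsub, ← units_pow_char_pow_eq_one_iff]
    exact congrArg Subtype.val (h ⟨u, hmem⟩)
  · rintro h ⟨u, hu⟩
    exact Subtype.ext ((units_pow_char_pow_eq_one_iff p N).2 (h _ (mem_ker_unitsMap_iff.1 hu)))

end NilKernel

section ResidueField

theorem exponent_units_of_forall_ker_pow_eq_zero_iff {A K : Type*} [CommRing A] [Field K] [Finite K]
    {f : A →+* K} (hf : Function.Surjective f) {p : ℕ} (hp : p.Prime) [CharP A p] {n : ℕ}
    (h : ∀ N, (∀ a ∈ RingHom.ker f, a ^ p ^ N = 0) ↔ n ≤ p ^ N) :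
    Monoid.exponent Aˣ = (Nat.card K - 1) * p ^ Nat.clog p n := by
  have : ExpChar A p := .prime hp
  have : CharP K p := (CharP.charP_iff_prime_eq_zero hp).2 (by
    rw [← map_natCast f, CharP.cast_eq_zero, map_zero])
  have hnil : ∀ a ∈ RingHom.ker f, IsNilpotent a := fun a ha ↦
    ⟨_, (h _).2 (Nat.le_pow_clog hp.one_lt n) a ha⟩
  have hsurj : Function.Surjective (Units.map (f : A →* K)) :=
    IsLocalRing.surjective_units_map_of_local_ringHom f hf (isLocalHom_of_ker_nil hf hnil)
  have hker : Monoid.exponent (Units.map (f : A →* K)).ker = p ^ Nat.clog p n :=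
    eq_pow_clog_of_forall_dvd_pow_iff hp fun N ↦
      (exponent_ker_unitsMap_dvd_iff p hnil N).trans (h N)
  have hcop : (p ^ Nat.clog p n).Coprime (Nat.card K - 1) :=
    (coprime_char_natCard_sub_one K p).pow_left _
  rw [← hker, ← exponent_units_eq_natCard_sub_one] at hcop
  rw [exponent_eq_exponent_ker_mul_exponent hsurj hcop, hker, exponent_units_eq_natCard_sub_one,
    mul_comm]

end ResidueField

section DedekindDomain

variable {R : Type*} [CommRing R] [IsDedekindDomain R] {P : Ideal R}

lemma forall_mem_pow_mem_pow_iff (hP : Prime P) {m n : ℕ} :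
    (∀ a ∈ P, a ^ m ∈ P ^ n) ↔ n ≤ m := by
  refine ⟨fun h ↦ ?_, fun hnm a ha ↦ Ideal.pow_le_pow_right hnm (Ideal.pow_mem_pow ha m)⟩
  have hP_top : P ≠ ⊤ := fun h_top ↦ hP.not_isUnit (Ideal.isUnit_iff.2 h_top)
  obtain ⟨a, ha, ha_sq⟩ := P.exists_mem_pow_notMem_pow_succ hP.ne_zero hP_top 1
  have hmult : emultiplicity P (Ideal.span {a}) = 1 := by
    exact emultiplicity_eq_coe.2
      ⟨Ideal.dvd_span_singleton.2 ha, mt Ideal.dvd_span_singleton.1 ha_sq⟩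
  have hdvd : P ^ n ∣ Ideal.span {a} ^ m := by
    rw [Ideal.span_singleton_pow, Ideal.dvd_span_singleton]
    exact h a (pow_one P ▸ ha)
  rw [pow_dvd_iff_le_emultiplicity, emultiplicity_pow hP, hmult, mul_one] at hdvd
  exact_mod_cast hdvd

theorem exponent_units_quotient_carlitz_general {p : ℕ} (hp : p.Prime) [CharP R p]
    (hP : Prime P) [Finite (R ⧸ P)] {n : ℕ} (hn : n ≠ 0) :
    Monoid.exponent (R ⧸ P ^ n)ˣ = (Nat.card (R ⧸ P) - 1) * p ^ Nat.clog p n := by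
  have : P.IsPrime := Ideal.isPrime_of_prime hP
  have : P.IsMaximal := Ideal.IsPrime.isMaximal this hP.ne_zero
  let := Ideal.Quotient.field P
  have hle : P ^ n ≤ P := Ideal.pow_le_self hn
  have : Nontrivial (R ⧸ P ^ n) := (Ideal.Quotient.factor hle).domain_nontrivial
  have : CharP (R ⧸ P ^ n) p := CharP.of_ringHom_of_ne_zero (Ideal.Quotient.mk _) p hp.ne_zero
  refine exponent_units_of_forall_ker_pow_eq_zero_iff (Ideal.Quotient.factor_surjective hle) hp
    fun N ↦ ?_
  rw [← forall_mem_pow_mem_pow_iff hP, Ideal.Quotient.mk_surjective.forall]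
  simp only [RingHom.mem_ker, Ideal.Quotient.factor_mk, ← map_pow, Ideal.Quotient.eq_zero_iff_mem]

end DedekindDomain

section Polynomial

lemma natCard_quotient_span_singleton {R : Type*} [CommRing R] [Nontrivial R] {f : R[X]}
    (hf : f.Monic) : Nat.card (R[X] ⧸ Ideal.span {f}) = Nat.card R ^ f.natDegree := by
  have := hf.finite_quotient
  have := hf.free_quotient
  rw [Nat.card_congr (Module.finBasis R (R[X] ⧸ Ideal.span {f})).equivFun.toEquiv, Nat.card_fun,
    Nat.card_fin, finrank_quotient_span_eq_natDegree' hf]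

end Polynomial

/-- for `℘ ∈ 𝔽_q[t]` monic irreducible of degree `d` and `n ≥ 1`, the exponent
of the unit group `(𝔽_q[t]/(℘^n))^×` equals `(q^d − 1)·p^{l_p(n)}`, where
`l_p(n) = min {N : p^N ≥ n}`. -/
theorem exponent_units_quotient_carlitz {Fq : Type*} [Field Fq] [Fintype Fq]
    (p q : ℕ) (hp : p.Prime) [CharP Fq p] (hq : q = Fintype.card Fq)
    (℘ : Fq[X]) (hmon : ℘.Monic) (hirr : Irreducible ℘)
    (d n : ℕ) (hdeg : ℘.natDegree = d) (hn : 1 ≤ n) :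
    Monoid.exponent ((Fq[X] ⧸ Ideal.span {℘ ^ n})ˣ)
      = (q ^ d - 1) * p ^ sInf {N : ℕ | n ≤ p ^ N} := by
  have := hmon.finite_quotient
  have : Finite (Fq[X] ⧸ Ideal.span {℘}) := Module.finite_of_finite Fq
  rw [← Ideal.span_singleton_pow, sInf_setOf_le_pow_eq_clog hp.one_lt, hq, ← hdeg,
    ← Nat.card_eq_fintype_card, ← natCard_quotient_span_singleton hmon]
  exact exponent_units_quotient_carlitz_general hp
    (Ideal.prime_span_singleton_iff.2 hirr.prime) (Nat.one_le_iff_ne_zero.1 hn)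
end

section
/- Let B be a commutative 𝔽_q-algebra, n ≥ 0, and I an ideal of the polynomial ring B[X] such that: (i) B[X]/I is a free B-module of rank q^n; (ii) f(0) = 0 for every f ∈ I; (iii) for every f ∈ I, the two-variable polynomial f(X+Y) ∈ B[X,Y] lies in the ideal of B[X,Y] generated by {g(X) : g ∈ I} ∪ {g(Y) : g ∈ I}; and (iv) for every λ ∈ 𝔽_q and every f ∈ I, the polynomial f(λX) lies in I. Then I is a principal ideal generated by a monic 𝔽_q-linear additive polynomial of degree q^n, i.e. there exist b_0, …, b_{n−1} ∈ B such that I = (P) with P(X) = X^{q^n} + Σ_{i=0}^{n−1} b_i X^{q^i}. -/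
open Polynomial

/-!
Over a nontrivial base, `I` is generated by the minimal polynomial `P` of the class of `X`, which
is monic of degree `q ^ n`. Let `x` be the class of `X` in `A = B[X] ⧸ (P)`, and view `B[X, Y]` as
`B[X][Y]`, so that `f(X + Y)` is the Taylor expansion of `f` at `X`, with the `j`-th Hasse
derivative of `f` as coefficient of `Y ^ j`. Closure under addition says that `P(Y)` divides
`P(x + Y)` in `A[Y]`; both are monic of the same degree, so they are equal. Comparing coefficients
of `Y ^ j`, and using that `1, x, …, x ^ (q ^ n - 1)` are independent over `B`, shows that
`(k + j).choose j` kills the coefficient of `P` at `k + j` whenever `j, k > 0`. Since `P(0) = 0`,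
only `p`-power exponents occur in `P`. Likewise `P(X)` divides `P(c X)`, which forces
`P(c X) = c ^ (q ^ n) P(X) = c P(X)` for `c ∈ 𝔽_q`, and a `p`-power exponent `i` such that
`c ^ i = c` for all `c ∈ 𝔽_q` is a power of `q`.
-/

theorem exists_monic_natDegree_eq_finrank_and_eq_span {B : Type*} [CommRing B] [Nontrivial B]
    (I : Ideal B[X]) [Module.Free B (B[X] ⧸ I)] [Module.Finite B (B[X] ⧸ I)] :
    ∃ P : B[X], P.Monic ∧ P.natDegree = Module.finrank B (B[X] ⧸ I) ∧ I = Ideal.span {P} := by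
  let x : B[X] ⧸ I := Ideal.Quotient.mkₐ B I X
  have haeval : aeval x = Ideal.Quotient.mkₐ B I := by ext; simp [x]
  have hx : Algebra.adjoin B {x} = ⊤ := by
    rw [Algebra.adjoin_singleton_eq_range_aeval, haeval, AlgHom.range_eq_top]
    exact Ideal.Quotient.mkₐ_surjective B I
  let hmin := IsAdjoinRootMonic.mkOfAdjoinEqTop' hx
  refine ⟨minpoly B x, hmin.monic, hmin.finrank.symm, ?_⟩
  calc
    I = RingHom.ker (Ideal.Quotient.mkₐ B I) := (Ideal.Quotient.mkₐ_ker B I).symm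
    _ = RingHom.ker (aeval x : B[X] →ₐ[B] B[X] ⧸ I) := by rw [haeval]
    _ = Ideal.span {minpoly B x} := hmin.ker_map

theorem hasseDeriv_map {R S : Type*} [Semiring R] [Semiring S] (φ : R →+* S) (j : ℕ) (f : R[X]) :
    hasseDeriv j (f.map φ) = (hasseDeriv j f).map φ := by
  ext i
  simp [hasseDeriv_coeff]

theorem eval₂_C_X_add_X_eq_taylor {B : Type*} [Semiring B] (f : B[X]) :
    eval₂ ((C : B[X] →+* B[X][X]).comp C) (C X + X) f = taylor X (f.map C) := by
  rw [taylor_apply, comp, eval₂_map, add_comm]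

theorem coeff_taylor_X_map_C {B : Type*} [Semiring B] (f : B[X]) (j : ℕ) :
    (taylor X (f.map C)).coeff j = hasseDeriv j f := by
  rw [taylor_coeff, hasseDeriv_map, eval_map, eval₂_C_X]

theorem span_image_C_union_image_map_C {B : Type*} [Semiring B] (P : B[X]) :
    Ideal.span ((fun g : B[X] => (C g : B[X][X])) '' ↑(Ideal.span {P}) ∪
      (fun g : B[X] => g.map (C : B →+* B[X])) '' ↑(Ideal.span {P})) =
      Ideal.span {C P, P.map C} := by
  have hmap (φ : B[X] →+* B[X][X]) : Ideal.span (φ '' ↑(Ideal.span {P})) = Ideal.span {φ P} := by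
    rw [← Ideal.map, Ideal.map_span, Set.image_singleton]
  rw [Ideal.span_union, Ideal.span_insert]
  exact congrArg₂ (· ⊔ ·) (hmap C) (hmap (mapRingHom C))

section ClosedUnderAddition

variable {B : Type*} [CommRing B] {P : B[X]}

theorem map_mk_taylor_X_map_C (hP : P.Monic)
    (hadd : taylor X (P.map C) ∈ Ideal.span {C P, P.map C}) :
    (taylor X (P.map C)).map (AdjoinRoot.mk P) = P.map (AdjoinRoot.of P) := by
  have hdvd : P.map (AdjoinRoot.of P) ∣ (taylor X (P.map C)).map (AdjoinRoot.mk P) := by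
    obtain ⟨a, b, hab⟩ := Ideal.mem_span_pair.mp hadd
    rw [← hab, Polynomial.map_add, Polynomial.map_mul, Polynomial.map_mul, map_C,
      AdjoinRoot.mk_self, C_0, mul_zero, zero_add, Polynomial.map_map]
    exact dvd_mul_left _ _
  have hmonic : (P.map (AdjoinRoot.of P)).Monic := hP.map _
  rw [map_taylor, Polynomial.map_map] at hdvd ⊢
  refine eq_of_monic_of_dvd_of_natDegree_le hmonic ?_ hdvd (natDegree_taylor _ _).le
  exact (leadingCoeff_taylor _ _).trans hmonic

theorem hasseDeriv_eq_C_coeff (hP : P.Monic)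
    (hadd : taylor X (P.map C) ∈ Ideal.span {C P, P.map C}) {j : ℕ} (hj : 0 < j) :
    hasseDeriv j P = C (P.coeff j) := by
  rcases Nat.eq_zero_or_pos P.natDegree with hdeg | hdeg
  · obtain rfl : P = 1 := hP.natDegree_eq_zero.mp hdeg
    rw [hasseDeriv_apply_one j hj, coeff_one, if_neg hj.ne', C_0]
  have hdvd : P ∣ hasseDeriv j P - C (P.coeff j) := by
    rw [← AdjoinRoot.mk_eq_mk, AdjoinRoot.mk_C, ← coeff_taylor_X_map_C, ← coeff_map,
      map_mk_taylor_X_map_C hP hadd, coeff_map]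
  have hlt : (hasseDeriv j P - C (P.coeff j)).natDegree < P.natDegree := by
    rw [natDegree_sub_C]
    exact (natDegree_hasseDeriv_le P j).trans_lt (by lia)
  by_contra hne
  exact hP.not_dvd_of_natDegree_lt (sub_ne_zero.mpr hne) hlt hdvd

theorem choose_mul_coeff_add_eq_zero (hP : P.Monic)
    (hadd : taylor X (P.map C) ∈ Ideal.span {C P, P.map C}) {j k : ℕ} (hj : 0 < j) (hk : 0 < k) :
    ((k + j).choose j : B) * P.coeff (k + j) = 0 := by
  rw [← hasseDeriv_coeff, hasseDeriv_eq_C_coeff hP hadd hj, coeff_C_of_ne_zero hk.ne']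

theorem exists_eq_prime_pow_of_coeff_ne_zero (K : Type*) [Field K] [Algebra K B] (p : ℕ)
    [Fact p.Prime] [CharP K p] (hP : P.Monic)
    (hadd : taylor X (P.map C) ∈ Ideal.span {C P, P.map C}) {i : ℕ} (hi : 0 < i)
    (hcoeff : P.coeff i ≠ 0) : ∃ k, i = p ^ k := by
  refine ⟨multiplicity p i, Choose.eq_pow_multiplicity_of_choose_modEq_zero_nat hi fun j hj => ?_⟩
  obtain ⟨hj1, hji⟩ := Finset.mem_Icc.mp hj
  obtain ⟨k, rfl⟩ := Nat.exists_eq_add_of_le' (show j ≤ i by lia)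
  have hzero : ((k + j).choose j : K) • P.coeff (k + j) = 0 := by
    rw [Nat.cast_smul_eq_nsmul, nsmul_eq_mul]
    exact choose_mul_coeff_add_eq_zero hP hadd (by lia) (by lia)
  rw [Nat.modEq_zero_iff_dvd, ← CharP.cast_eq_zero_iff K p]
  exact (smul_eq_zero.mp hzero).resolve_right hcoeff

end ClosedUnderAddition

theorem pow_mul_coeff_eq_pow_natDegree_mul_coeff {B : Type*} [CommSemiring B] {P : B[X]}
    (hP : P.Monic) {c : B} (hdvd : P ∣ P.comp (C c * X)) (i : ℕ) :
    c ^ i * P.coeff i = c ^ P.natDegree * P.coeff i := by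
  have hdeg : (P.comp (C c * X)).natDegree ≤ P.natDegree :=
    natDegree_comp_le.trans
      (mul_le_of_le_one_right (Nat.zero_le _) ((natDegree_C_mul_le c X).trans natDegree_X_le))
  have hcomp := eq_mul_leadingCoeff_of_monic_of_dvd_of_natDegree_le hP hdvd hdeg
  have hcoeff (m : ℕ) : c ^ m * P.coeff m = (P.comp (C c * X)).leadingCoeff * P.coeff m := by
    rw [mul_comm, ← comp_C_mul_X_coeff, hcomp, coeff_mul_C, ← hcomp, mul_comm]
  have hlead := hcoeff P.natDegree
  rw [hP.coeff_natDegree, mul_one, mul_one] at hlead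
  rw [hlead, hcoeff]

theorem pow_eq_pow_natDegree_of_coeff_ne_zero {K B : Type*} [Field K] [CommRing B] [Algebra K B]
    {P : B[X]} (hP : P.Monic) {c : K} (hdvd : P ∣ P.comp (C (algebraMap K B c) * X)) {i : ℕ}
    (hcoeff : P.coeff i ≠ 0) :
    c ^ i = c ^ P.natDegree := by
  have hsmul : c ^ i • P.coeff i = c ^ P.natDegree • P.coeff i := by
    simpa only [Algebra.smul_def, map_pow] using
      pow_mul_coeff_eq_pow_natDegree_mul_coeff hP hdvd i
  exact smul_left_injective K hcoeff hsmul

theorem finrank_dvd_of_forall_pow_card_pow_eq_self (K : Type*) {L : Type*} [Field K] [Fintype K]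
    [Field L] [Finite L] [Algebra K L] {k : ℕ} (h : ∀ x : L, x ^ Fintype.card K ^ k = x) :
    Module.finrank K L ∣ k := by
  rw [← FiniteField.orderOf_frobeniusAlgHom K L]
  refine orderOf_dvd_of_pow_eq_one (AlgHom.ext fun x => ?_)
  simpa only [AlgHom.coe_pow, FiniteField.coe_frobeniusAlgHom, pow_iterate,
    AlgHom.one_apply] using h x

theorem exists_prime_pow_eq_card_pow {F : Type*} [Field F] [Fintype F] (p : ℕ) [Fact p.Prime]
    [CharP F p] {k : ℕ} (h : ∀ x : F, x ^ p ^ k = x) : ∃ j, p ^ k = Fintype.card F ^ j := by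
  let _ : Algebra (ZMod p) F := ZMod.algebra F p
  obtain ⟨j, rfl⟩ := finrank_dvd_of_forall_pow_card_pow_eq_self (ZMod p) (L := F)
    (by simpa only [ZMod.card] using h)
  exact ⟨j, by rw [Module.card_eq_pow_finrank (K := ZMod p), ZMod.card, pow_mul]⟩

theorem eq_sum_range_C_coeff_mul_X_pow_pow {R : Type*} [Semiring R] {P : R[X]} {q n : ℕ}
    (hq : 1 < q) (hdeg : P.natDegree ≤ q ^ n) (hsupp : ∀ i, P.coeff i ≠ 0 → ∃ j, i = q ^ j) :
    P = ∑ j ∈ Finset.range (n + 1), C (P.coeff (q ^ j)) * X ^ q ^ j := by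
  have hsub : P.support ⊆ (Finset.range (n + 1)).image (q ^ ·) := by
    intro i hi
    obtain ⟨j, rfl⟩ := hsupp i (mem_support_iff.mp hi)
    have hj : j ≤ n := (Nat.pow_le_pow_iff_right hq).mp ((le_natDegree_of_mem_supp _ hi).trans hdeg)
    exact Finset.mem_image_of_mem _ (Finset.mem_range_succ_iff.mpr hj)
  calc
    P = ∑ i ∈ P.support, C (P.coeff i) * X ^ i := P.as_sum_support_C_mul_X_pow
    _ = ∑ i ∈ (Finset.range (n + 1)).image (q ^ ·), C (P.coeff i) * X ^ i :=
      Finset.sum_subset hsub fun i _ hi => by rw [notMem_support_iff.mp hi, C_0, zero_mul]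
    _ = ∑ j ∈ Finset.range (n + 1), C (P.coeff (q ^ j)) * X ^ q ^ j :=
      Finset.sum_image (Nat.pow_right_injective hq).injOn

theorem eq_X_pow_add_sum_of_monic {R : Type*} [Semiring R] {P : R[X]} {q n : ℕ}
    (hP : P.Monic) (hq : 1 < q) (hdeg : P.natDegree = q ^ n)
    (hsupp : ∀ i, P.coeff i ≠ 0 → ∃ j, i = q ^ j) :
    P = X ^ q ^ n + ∑ j ∈ Finset.range n, C (P.coeff (q ^ j)) * X ^ q ^ j := by
  conv_lhs => rw [eq_sum_range_C_coeff_mul_X_pow_pow hq hdeg.le hsupp]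
  rw [Finset.sum_range_succ, add_comm, ← hdeg, hP.coeff_natDegree, C_1, one_mul]

/-- if `I ⊆ B[X]` cuts out a finite free closed `𝔽_q`-submodule scheme of
rank `q^n` of `𝔾_a` (i.e. `B[X]/I` is free of rank `q^n`, every `f ∈ I` vanishes at `0`,
`f(X+Y)` lies in the ideal generated by `I(X) ∪ I(Y)`, and `I` is stable under
`X ↦ λX` for `λ ∈ 𝔽_q`), then `I` is generated by a monic `𝔽_q`-linear additive
polynomial `X^{q^n} + Σ_{i<n} b_i X^{q^i}`. -/
theorem submodule_scheme_additive_generator {Fq : Type*} [Field Fq] [Fintype Fq]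
    (q : ℕ) (hq : q = Fintype.card Fq)
    {B : Type*} [CommRing B] [Algebra Fq B]
    (n : ℕ) (I : Ideal B[X])
    (hfree : Module.Free B (B[X] ⧸ I))
    (hfin : Module.Finite B (B[X] ⧸ I))
    (hrank : Module.finrank B (B[X] ⧸ I) = q ^ n)
    (hzero : ∀ f ∈ I, f.coeff 0 = 0)
    (hadd : ∀ f ∈ I,
      Polynomial.eval₂
        ((Polynomial.C : B[X] →+* Polynomial B[X]).comp (Polynomial.C : B →+* B[X]))
        (Polynomial.C (Polynomial.X : B[X]) + Polynomial.X) f ∈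
      Ideal.span ((fun g : B[X] => (Polynomial.C g : Polynomial B[X])) '' ↑I ∪
        (fun g : B[X] => g.map (Polynomial.C : B →+* B[X])) '' ↑I))
    (hsmul : ∀ (c : Fq), ∀ f ∈ I,
      f.comp (Polynomial.C (algebraMap Fq B c) * Polynomial.X) ∈ I) :
    ∃ b : ℕ → B, I = Ideal.span
      {Polynomial.X ^ q ^ n
        + ∑ i ∈ Finset.range n, Polynomial.C (b i) * Polynomial.X ^ q ^ i} := by
  nontriviality B
  obtain ⟨P, hP, hdeg, rfl⟩ := exists_monic_natDegree_eq_finrank_and_eq_span I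
  have hmem : P ∈ Ideal.span {P} := Ideal.mem_span_singleton_self P
  have hdegP : P.natDegree = q ^ n := hdeg.trans hrank
  have haddP : taylor X (P.map C) ∈ Ideal.span {C P, P.map C} := by
    rw [← eval₂_C_X_add_X_eq_taylor, ← span_image_C_union_image_map_C]
    exact hadd P hmem
  have hq1 : 1 < q := hq ▸ Fintype.one_lt_card
  obtain ⟨p, hchar⟩ := CharP.exists Fq
  have hp : Fact p.Prime := ⟨CharP.char_is_prime Fq p⟩
  have hsupp (i : ℕ) (hi : P.coeff i ≠ 0) : ∃ j, i = q ^ j := by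
    have hi0 : 0 < i := Nat.pos_of_ne_zero (by rintro rfl; exact hi (hzero P hmem))
    obtain ⟨k, rfl⟩ := exists_eq_prime_pow_of_coeff_ne_zero Fq p hP haddP hi0 hi
    have hpow (c : Fq) : c ^ p ^ k = c := by
      rw [pow_eq_pow_natDegree_of_coeff_ne_zero hP
        (Ideal.mem_span_singleton.mp (hsmul c P hmem)) hi, hdegP, hq, FiniteField.pow_card_pow]
    exact hq ▸ exists_prime_pow_eq_card_pow p hpow
  exact ⟨fun j => P.coeff (q ^ j),
    congrArg (fun Q => Ideal.span {Q}) (eq_X_pow_add_sum_of_monic hP hq1 hdegP hsupp)⟩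
end

section
/- Let B be a commutative 𝔽_q-algebra, θ ∈ B, a_1 ∈ B and a_2 ∈ B^× a unit, and set F(X) = θX + a_1X^q + a_2X^{q²} ∈ B[X]. Let n ≥ 1 and let P(X) = X^{q^n} + Σ_{i=0}^{n−1} p_i X^{q^i} be a monic 𝔽_q-linear additive polynomial over B, and let G(X) = Σ_{i=0}^{s} b_i X^{q^i} with b_s ≠ 0 be an 𝔽_q-linear additive polynomial satisfying G(P(X)) = P(F(X)) in B[X]. Then s = 2, b_2 = a_2^{q^n}, and p_0·(b_0 − θ) = 0; in particular, if p_0 is a unit of B then b_0 = θ. -/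
/-!
Comparing the degrees of `G ∘ P = P ∘ F`, where `P` is monic of positive degree and
`lc(F) ^ deg P ≠ 0`, gives `deg G = deg F`; comparing the top coefficients then gives
`lc(G) = lc(F) ^ deg P`. If moreover `P` and `F` have no constant term, the linear coefficient is
multiplicative under these compositions, so `P₁ (G₁ - F₁) = 0`. For polynomials in the monomials
`X ^ q ^ i`, the degree `q ^ s` determines `s`, and the linear coefficient is the one of index `0`.
-/

open Polynomial

section Comp

variable {R : Type*}

lemma coeff_one_comp_of_coeff_zero [CommSemiring R] (f : R[X]) {g : R[X]} (hg : g.coeff 0 = 0) :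
    (f.comp g).coeff 1 = f.coeff 1 * g.coeff 1 := by
  have coeff_one_eq (h : R[X]) : h.coeff 1 = (derivative h).eval 0 := by
    simp [← coeff_zero_eq_eval_zero, coeff_derivative]
  rw [coeff_zero_eq_eval_zero] at hg
  simp only [coeff_one_eq, derivative_comp, eval_mul, eval_comp, hg, mul_comm]

lemma natDegree_comp_of_monic_right [Semiring R] (f : R[X]) {g : R[X]} (hg : g.Monic) :
    (f.comp g).natDegree = f.natDegree * g.natDegree := by
  obtain rfl | hf := eq_or_ne f 0
  · simp
  · exact natDegree_comp_eq_of_mul_ne_zero (by simpa [hg.leadingCoeff])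

lemma natDegree_eq_of_comp_eq_comp [Semiring R] {F G P : R[X]} (hP : P.Monic)
    (hP_deg : P.natDegree ≠ 0) (hF : F.leadingCoeff ^ P.natDegree ≠ 0)
    (h : G.comp P = P.comp F) : G.natDegree = F.natDegree := by
  apply Nat.eq_of_mul_eq_mul_right (Nat.pos_of_ne_zero hP_deg)
  calc G.natDegree * P.natDegree
    _ = (P.comp F).natDegree := by rw [← natDegree_comp_of_monic_right G hP, h]
    _ = P.natDegree * F.natDegree :=
      natDegree_comp_eq_of_mul_ne_zero (by rwa [hP.leadingCoeff, one_mul])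
    _ = F.natDegree * P.natDegree := mul_comm _ _

lemma leadingCoeff_eq_pow_of_comp_eq_comp [Semiring R] {F G P : R[X]} (hP : P.Monic)
    (hP_deg : P.natDegree ≠ 0) (hF_deg : F.natDegree ≠ 0)
    (hF : F.leadingCoeff ^ P.natDegree ≠ 0) (h : G.comp P = P.comp F) :
    G.leadingCoeff = F.leadingCoeff ^ P.natDegree := by
  have hdeg := natDegree_eq_of_comp_eq_comp hP hP_deg hF h
  calc G.leadingCoeff
    _ = (G.comp P).coeff (G.natDegree * P.natDegree) := by
      rw [coeff_comp_degree_mul_degree hP_deg, hP.leadingCoeff, one_pow, mul_one]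
    _ = (P.comp F).coeff (P.natDegree * F.natDegree) := by rw [h, hdeg, mul_comm]
    _ = F.leadingCoeff ^ P.natDegree := by
      rw [coeff_comp_degree_mul_degree hF_deg, hP.leadingCoeff, one_mul]

lemma coeff_one_mul_sub_eq_zero_of_comp_eq_comp [CommRing R] {F G P : R[X]}
    (hP : P.coeff 0 = 0) (hF : F.coeff 0 = 0) (h : G.comp P = P.comp F) :
    P.coeff 1 * (G.coeff 1 - F.coeff 1) = 0 := by
  have hlin : G.coeff 1 * P.coeff 1 = P.coeff 1 * F.coeff 1 := by
    rw [← coeff_one_comp_of_coeff_zero G hP, h, coeff_one_comp_of_coeff_zero P hF]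
  rw [mul_sub, mul_comm, hlin, sub_self]

end Comp

/-- The `q`-polynomial `∑ i ≤ m, c i * X ^ q ^ i`; over an algebra over the field with `q` elements
these are the `𝔽_q`-linear additive polynomials. The coefficients are a sequence on all of `ℕ`, with
junk values beyond the top index `m`. -/
noncomputable def qPolynomial {R : Type*} [Semiring R] (q : ℕ) (c : ℕ → R) (m : ℕ) : R[X] :=
  ∑ i ∈ Finset.range (m + 1), C (c i) * X ^ q ^ i

section QPolynomial

variable {R : Type*} [Semiring R] {q : ℕ}

lemma qPolynomial_update_one (q : ℕ) (c : ℕ → R) (m : ℕ) :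
    qPolynomial q (Function.update c m 1) m =
      X ^ q ^ m + ∑ i ∈ Finset.range m, C (c i) * X ^ q ^ i := by
  rw [qPolynomial, Finset.sum_range_succ, add_comm, Function.update_self, C_1, one_mul]
  congr 1
  refine Finset.sum_congr rfl fun i hi ↦ ?_
  rw [Function.update_of_ne (Finset.mem_range.1 hi).ne]

lemma coeff_qPolynomial_pow (hq : 1 < q) (c : ℕ → R) {j m : ℕ} (hj : j ≤ m) :
    (qPolynomial q c m).coeff (q ^ j) = c j := by
  simp [qPolynomial, Nat.pow_right_inj hq, Nat.lt_succ_of_le hj]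

lemma coeff_one_qPolynomial (hq : 1 < q) (c : ℕ → R) (m : ℕ) :
    (qPolynomial q c m).coeff 1 = c 0 := by
  simpa using coeff_qPolynomial_pow hq c m.zero_le

lemma coeff_zero_qPolynomial (hq : q ≠ 0) (c : ℕ → R) (m : ℕ) :
    (qPolynomial q c m).coeff 0 = 0 := by
  simp [qPolynomial, (pow_ne_zero _ hq).symm]

lemma natDegree_qPolynomial_le (hq : q ≠ 0) (c : ℕ → R) (m : ℕ) :
    (qPolynomial q c m).natDegree ≤ q ^ m :=
  natDegree_sum_le_of_forall_le _ _ fun _ hi ↦ (natDegree_C_mul_X_pow_le _ _).trans <|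
    Nat.pow_le_pow_right (Nat.pos_of_ne_zero hq) (Finset.mem_range_succ_iff.1 hi)

lemma natDegree_qPolynomial (hq : 1 < q) {c : ℕ → R} {m : ℕ} (hc : c m ≠ 0) :
    (qPolynomial q c m).natDegree = q ^ m :=
  natDegree_eq_of_le_of_coeff_ne_zero (natDegree_qPolynomial_le (by lia) c m) <| by
    rwa [coeff_qPolynomial_pow hq c le_rfl]

lemma leadingCoeff_qPolynomial (hq : 1 < q) {c : ℕ → R} {m : ℕ} (hc : c m ≠ 0) :
    (qPolynomial q c m).leadingCoeff = c m := by
  rw [leadingCoeff, natDegree_qPolynomial hq hc, coeff_qPolynomial_pow hq c le_rfl]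

end QPolynomial

theorem quotient_drinfeld_t_action_general {R : Type*} [CommRing R] {q : ℕ} (hq : 1 < q)
    {a p b : ℕ → R} {r n s : ℕ} (ha : a r ^ q ^ n ≠ 0) (hp : p n = 1) (hb : b s ≠ 0)
    (hcomp : (qPolynomial q b s).comp (qPolynomial q p n) =
      (qPolynomial q p n).comp (qPolynomial q a r)) :
    s = r ∧ b r = a r ^ q ^ n ∧ p 0 * (b 0 - a 0) = 0 ∧ (IsUnit (p 0) → b 0 = a 0) := by
  have hq_pow (k : ℕ) : q ^ k ≠ 0 := pow_ne_zero k (by lia)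
  have : Nontrivial R := ⟨⟨_, _, hb⟩⟩
  have ha_top : a r ≠ 0 := ne_zero_pow (hq_pow n) ha
  have hp_top : p n ≠ 0 := hp ▸ one_ne_zero
  have hP_deg := natDegree_qPolynomial hq hp_top
  have hF_lead := leadingCoeff_qPolynomial hq ha_top
  have hP_monic : (qPolynomial q p n).Monic := (leadingCoeff_qPolynomial hq hp_top).trans hp
  have hP_deg_ne : (qPolynomial q p n).natDegree ≠ 0 := hP_deg ▸ hq_pow n
  have hF_deg_ne : (qPolynomial q a r).natDegree ≠ 0 := natDegree_qPolynomial hq ha_top ▸ hq_pow r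
  have hF_pow : (qPolynomial q a r).leadingCoeff ^ (qPolynomial q p n).natDegree ≠ 0 := by
    rwa [hF_lead, hP_deg]
  have hdeg := natDegree_eq_of_comp_eq_comp hP_monic hP_deg_ne hF_pow hcomp
  have hlead := leadingCoeff_eq_pow_of_comp_eq_comp hP_monic hP_deg_ne hF_deg_ne hF_pow hcomp
  have hlin := coeff_one_mul_sub_eq_zero_of_comp_eq_comp
    (coeff_zero_qPolynomial (by lia) p n) (coeff_zero_qPolynomial (by lia) a r) hcomp
  rw [natDegree_qPolynomial hq hb, natDegree_qPolynomial hq ha_top] at hdeg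
  rw [leadingCoeff_qPolynomial hq hb, hF_lead, hP_deg] at hlead
  simp only [coeff_one_qPolynomial hq] at hlin
  obtain rfl : s = r := Nat.pow_right_injective hq hdeg
  exact ⟨rfl, hlead, hlin, fun hu ↦ sub_eq_zero.1 (hu.mul_right_eq_zero.1 hlin)⟩

/-- let `F(X) = θX + a₁X^q + a₂X^{q²}` with `a₂` a unit, let
`P(X) = X^{q^n} + Σ_{i<n} p_i X^{q^i}` be monic additive, and let
`G(X) = Σ_{i=0}^{s} b_i X^{q^i}` with `b_s ≠ 0` satisfy `G(P(X)) = P(F(X))`.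
Then `s = 2`, `b₂ = a₂^{q^n}` and `p₀(b₀ − θ) = 0`; in particular if `p₀` is a unit
then `b₀ = θ`. -/
theorem quotient_drinfeld_t_action {Fq : Type*} [Field Fq] [Fintype Fq]
    (q : ℕ) (hq : q = Fintype.card Fq)
    {B : Type*} [CommRing B] [Algebra Fq B]
    (θ a₁ : B) (a₂ : Bˣ) (n : ℕ) (hn : 1 ≤ n)
    (pc : ℕ → B) (s : ℕ) (b : ℕ → B) (hbs : b s ≠ 0)
    (hcomp :
      (∑ i ∈ Finset.range (s + 1), Polynomial.C (b i) * Polynomial.X ^ q ^ i).comp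
          (Polynomial.X ^ q ^ n
            + ∑ i ∈ Finset.range n, Polynomial.C (pc i) * Polynomial.X ^ q ^ i)
        = (Polynomial.X ^ q ^ n
            + ∑ i ∈ Finset.range n, Polynomial.C (pc i) * Polynomial.X ^ q ^ i).comp
          (Polynomial.C θ * Polynomial.X + Polynomial.C a₁ * Polynomial.X ^ q
            + Polynomial.C (a₂ : B) * Polynomial.X ^ q ^ 2)) :
    s = 2 ∧ b 2 = (a₂ : B) ^ q ^ n ∧ pc 0 * (b 0 - θ) = 0 ∧
      (IsUnit (pc 0) → b 0 = θ) := by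
  have : Nontrivial B := ⟨⟨_, _, hbs⟩⟩
  have hF : C θ * X + C a₁ * X ^ q + C (a₂ : B) * X ^ q ^ 2 =
      qPolynomial q ([θ, a₁, a₂].getD · 0) 2 := by
    simp [qPolynomial, Finset.sum_range_succ]
  rw [← qPolynomial_update_one, hF] at hcomp
  simpa [Function.update_of_ne (Nat.ne_of_lt hn)] using quotient_drinfeld_t_action_general
    (hq ▸ Fintype.one_lt_card) (a₂.isUnit.pow _).ne_zero (Function.update_self n 1 pc) hbs hcomp
end

section
/- Let d ≥ 1, let k be a field containing the finite field 𝔽_{q^d}, and let θ ∈ k be a generator of 𝔽_{q^d} over 𝔽_q (so θ^{q^d} = θ but θ^{q^r} ≠ θ for 1 ≤ r ≤ d−1). Let a_1 ∈ k, a_2 ∈ k∖{0}, c ∈ k∖{0}, and set F(X) = θX + a_1X^q + a_2X^{q²}. Then there is no polynomial f(X) = Σ_{i=1}^{s} b_i X^{q^i} ∈ k[X] (an 𝔽_q-linear additive polynomial with vanishing coefficient of X) such that f(F(X)) − θ·f(X) = c·X^{q^{d+1}} in k[X]. -/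
open Polynomial

/-!
Suppose `f ∘ F - θ f = c X^{q^{d+1}}`. Comparing degrees, `deg f * q² = q^{d+1}`, so
`deg f = q^{d-1}`. Hence the lowest exponent `q^l` of `f` satisfies `1 ≤ l ≤ d - 1`. As
`F = θ X + ⋯`, the coefficient of `f ∘ F - θ f` at `X^{q^l}` is the trailing coefficient of `f`
times `θ^{q^l} - θ`, which is nonzero, whereas `c X^{q^{d+1}}` has no such term. Since only
the two extreme terms of `f ∘ F` enter, it is never expanded by means of the Frobenius.
-/

theorem coeff_comp_of_X_pow_dvd {R : Type*} [CommSemiring R] {f F : R[X]} {n : ℕ}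
    (hf : X ^ n ∣ f) (hF : F.coeff 0 = 0) :
    (f.comp F).coeff n = f.coeff n * F.coeff 1 ^ n := by
  obtain ⟨g, rfl⟩ := hf
  obtain ⟨G, rfl⟩ := X_dvd_iff.2 hF
  have hcomp : (X ^ n * g).comp (X * G) = X ^ n * (G ^ n * g.comp (X * G)) := by
    rw [mul_comp, X_pow_comp, mul_pow, mul_assoc]
  have hg : (g.comp (X * G)).coeff 0 = g.coeff 0 := by
    simp only [coeff_zero_eq_eval_zero, eval_comp, eval_mul, eval_X, zero_mul]
  have hG : (G ^ n).coeff 0 = G.coeff 0 ^ n := by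
    simp only [coeff_zero_eq_eval_zero, eval_pow]
  rw [hcomp, coeff_X_pow_mul', coeff_X_pow_mul', if_pos le_rfl, if_pos le_rfl, Nat.sub_self,
    mul_coeff_zero, hg, hG, coeff_X_mul, mul_comm]

theorem coeff_natTrailingDegree_comp_sub_C_mul {R : Type*} [CommRing R] {F : R[X]}
    (hF : F.coeff 0 = 0) (f : R[X]) (a : R) :
    (f.comp F - C a * f).coeff f.natTrailingDegree =
      f.trailingCoeff * (F.coeff 1 ^ f.natTrailingDegree - a) := by
  have hf : X ^ f.natTrailingDegree ∣ f :=
    X_pow_dvd_iff.2 fun _ ↦ coeff_eq_zero_of_lt_natTrailingDegree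
  rw [coeff_sub, coeff_C_mul, coeff_comp_of_X_pow_dvd hf hF, trailingCoeff]
  ring

theorem natDegree_comp_sub_C_mul {R : Type*} [Ring R] [NoZeroDivisors R] {F : R[X]}
    (hF : 1 < F.natDegree) (f : R[X]) (a : R) :
    (f.comp F - C a * f).natDegree = f.natDegree * F.natDegree := by
  rcases Nat.eq_zero_or_pos f.natDegree with hf | hf
  · rw [eq_C_of_natDegree_eq_zero hf, C_comp, ← C_mul, ← C_sub, natDegree_C, natDegree_C, zero_mul]
  · have hlt : (C a * f).natDegree < (f.comp F).natDegree :=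
      calc (C a * f).natDegree ≤ f.natDegree := natDegree_C_mul_le a f
        _ < f.natDegree * F.natDegree := lt_mul_of_one_lt_right hf hF
        _ = (f.comp F).natDegree := natDegree_comp.symm
    rw [natDegree_sub_eq_left_of_natDegree_lt hlt, natDegree_comp]

theorem exists_eq_pow_of_mem_support_sum {R : Type*} [Semiring R] {q : ℕ} {b : ℕ → R}
    {I : Finset ℕ} {n : ℕ} (hn : n ∈ (∑ i ∈ I, C (b i) * X ^ q ^ i).support) :
    ∃ i ∈ I, n = q ^ i := by
  rw [mem_support_iff, finsetSum_coeff] at hn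
  obtain ⟨i, hi, hcoeff⟩ := Finset.exists_ne_zero_of_sum_ne_zero hn
  rw [coeff_C_mul_X_pow] at hcoeff
  exact ⟨i, hi, of_not_not fun hne ↦ hcoeff (if_neg hne)⟩

theorem trinomial_coeff_zero {R : Type*} [Semiring R] {k m n : ℕ} (hk : 0 < k) (hkm : k < m)
    (hmn : m < n) (u v w : R) : (trinomial k m n u v w).coeff 0 = 0 := by
  have hm : 0 < m := hk.trans hkm
  simp only [trinomial_def, coeff_add, coeff_C_mul_X_pow, hk.ne, hm.ne, (hm.trans hmn).ne,
    if_false, add_zero]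

theorem not_strictly_inner_general {R : Type*} [CommRing R] [NoZeroDivisors R] {q : ℕ} (hq : 1 < q)
    {r N : ℕ} (hr : r ≠ 0) {F : R[X]} {θ : R} (hF₀ : F.coeff 0 = 0) (hF₁ : F.coeff 1 = θ)
    (hF : F.natDegree = q ^ r) (hθ : ∀ i, 1 ≤ i → i + r ≤ N → θ ^ q ^ i ≠ θ)
    {c : R} (hc : c ≠ 0) (s : ℕ) (b : ℕ → R) :
    (∑ i ∈ Finset.Icc 1 s, C (b i) * X ^ q ^ i).comp F
        - C θ * (∑ i ∈ Finset.Icc 1 s, C (b i) * X ^ q ^ i)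
      ≠ C c * X ^ q ^ N := by
  set f : R[X] := ∑ i ∈ Finset.Icc 1 s, C (b i) * X ^ q ^ i
  intro h
  have hdeg : f.natDegree * q ^ r = q ^ N := by
    rw [← hF, ← natDegree_comp_sub_C_mul (hF ▸ Nat.one_lt_pow hr hq) f θ, h,
      natDegree_C_mul_X_pow _ _ hc]
  have hf : f ≠ 0 := by
    intro hf
    rw [hf, natDegree_zero, zero_mul] at hdeg
    exact (pow_pos (zero_lt_one.trans hq) N).ne hdeg
  obtain ⟨m, -, hm⟩ : ∃ m ∈ Finset.Icc 1 s, f.natDegree = q ^ m :=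
    exists_eq_pow_of_mem_support_sum (natDegree_mem_support_of_nonzero hf)
  obtain ⟨l, hl, hl_eq⟩ : ∃ l ∈ Finset.Icc 1 s, f.natTrailingDegree = q ^ l :=
    exists_eq_pow_of_mem_support_sum (natTrailingDegree_mem_support_of_nonzero hf)
  have hmN : m + r = N := Nat.pow_right_injective hq (by simpa only [pow_add, hm] using hdeg)
  have hlm : l ≤ m :=
    (Nat.pow_le_pow_iff_right hq).1 (hl_eq ▸ hm ▸ natTrailingDegree_le_natDegree f)
  have hlN : q ^ l ≠ q ^ N := (Nat.pow_lt_pow_right hq (by omega)).ne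
  have htrail : f.trailingCoeff * (θ ^ q ^ l - θ) = 0 := by
    rw [← hF₁, ← hl_eq, ← coeff_natTrailingDegree_comp_sub_C_mul hF₀, hF₁, h, coeff_C_mul_X_pow,
      hl_eq, if_neg hlN]
  have hfix : θ ^ q ^ l = θ :=
    sub_eq_zero.1 ((mul_eq_zero.1 htrail).resolve_left (mt trailingCoeff_eq_zero.1 hf))
  exact hθ l (Finset.mem_Icc.1 hl).1 (by omega) hfix

/-- let `k ⊇ 𝔽_{q^d}` be a field, `θ ∈ k` a generator of `𝔽_{q^d}` over
`𝔽_q` (so `θ^{q^d} = θ` and `θ^{q^r} ≠ θ` for `1 ≤ r ≤ d−1`), `a₁ ∈ k`, `a₂, c ∈ k∖{0}`,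
and `F(X) = θX + a₁X^q + a₂X^{q²}`. Then no `𝔽_q`-linear additive polynomial
`f(X) = Σ_{i=1}^{s} b_i X^{q^i}` with vanishing linear coefficient satisfies
`f(F(X)) − θ·f(X) = c·X^{q^{d+1}}`. -/
theorem not_strictly_inner {Fq : Type*} [Field Fq] [Fintype Fq]
    (q : ℕ) (hq : q = Fintype.card Fq)
    {k : Type*} [Field k] [Algebra Fq k]
    (d : ℕ) (hd : 1 ≤ d)
    (θ : k) (hθ1 : θ ^ q ^ d = θ) (hθ2 : ∀ r, 1 ≤ r → r ≤ d - 1 → θ ^ q ^ r ≠ θ)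
    (a₁ a₂ : k) (ha₂ : a₂ ≠ 0) (c : k) (hc : c ≠ 0) :
    ∀ (s : ℕ) (b : ℕ → k),
      (∑ i ∈ Finset.Icc 1 s, Polynomial.C (b i) * Polynomial.X ^ q ^ i).comp
          (Polynomial.C θ * Polynomial.X + Polynomial.C a₁ * Polynomial.X ^ q
            + Polynomial.C a₂ * Polynomial.X ^ q ^ 2)
        - Polynomial.C θ * (∑ i ∈ Finset.Icc 1 s, Polynomial.C (b i) * Polynomial.X ^ q ^ i)
      ≠ Polynomial.C c * Polynomial.X ^ q ^ (d + 1) := by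
  intro s b
  have hq_one : 1 < q := hq ▸ Fintype.one_lt_card
  have hq_sq : q < q ^ 2 := lt_self_pow₀ hq_one one_lt_two
  have hF : C θ * X + C a₁ * X ^ q + C a₂ * X ^ q ^ 2 = trinomial 1 q (q ^ 2) θ a₁ a₂ := by
    rw [trinomial_def, pow_one]
  rw [hF]
  exact not_strictly_inner_general hq_one two_ne_zero
    (trinomial_coeff_zero one_pos hq_one hq_sq θ a₁ a₂) (trinomial_trailing_coeff' hq_one hq_sq)
    (trinomial_natDegree hq_one hq_sq ha₂) (fun i hi hid ↦ hθ2 i hi (by omega)) hc s b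
end

section
/- Let k be a field, F = k((u)) the Laurent series field with u-adic order v (v(u) = 1), and let d ≥ 1 and q ≥ 2 be a prime power. Let V(X) = Σ_{i=0}^{d} a_i X^{q^i} ∈ F[X] with v(a_0) = 1, v(a_i) ≥ 1 for 1 ≤ i ≤ d−1, and v(a_d) = 0. Let L be a field extension of F equipped with a valuation w (with values in a linearly ordered commutative group with zero) such that 0 < w(u) < 1 and w(a) = w(u)^{v(a)} for every nonzero a ∈ F. Then: (a) every root z ∈ L∖{0} of V satisfies w(z)^{q^d − 1} = w(u); and (b) defining the twisted iterates V^{[1]} = V and V^{[n]}(X) = V(σ(V^{[n−1]})(X)), where σ raises each coefficient to the q^d-th power, if L contains a splitting field of V^{[n]} then there exists a root z' ∈ L∖{0} of V^{[n]} with w(z')^{(q^d − 1)·q^{d(n−1)}} = w(u). -/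
open Polynomial

/-- Coefficientwise `Q`-th power twist of a polynomial (`σ` raising each coefficient to
the `Q`-th power). -/
noncomputable def frobTwist {F : Type*} [CommRing F] (Q : ℕ) (P : F[X]) : F[X] :=
  ∑ i ∈ Finset.range (P.natDegree + 1), Polynomial.C (P.coeff i ^ Q) * Polynomial.X ^ i

/-- Twisted iterates `V^{[n]}`: `V^{[0]} = X` and `V^{[n+1]} = V(σ(V^{[n]})(X))`, so that
`V^{[1]} = V`. -/
noncomputable def iterTwist {F : Type*} [CommRing F] (Q : ℕ) (V : F[X]) : ℕ → F[X]
  | 0 => Polynomial.X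
  | n + 1 => V.comp (frobTwist Q (iterTwist Q V n))

/-!
A polynomial whose leading coefficient is a unit and whose other coefficients lie in
`{x | v x ≤ t}` is, modulo that ideal, a unit times a monomial of the same degree. Such
polynomials are closed under composition and under coefficientwise powers, so every twisted
iterate of `V` is one of them. If moreover the constant term has value exactly `t`, with
`0 < t < 1`, then the Newton polygon is a single segment and every root `z` satisfies
`v z ^ deg = t`.

This is used twice. Writing `V = X * E`, it gives `v y ^ (q ^ d - 1) = v u` for every root `y`
of `E`. Next put `W = σ(V^{[n-1]})` and choose a root `z` of `E ∘ W`: then `y = W(z)` is a root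
of `E` and `v u ≤ v y < 1`, so `W - y` is again of the above form, now with constant term of
value `v y`. Hence `v z ^ q ^ (d (n - 1)) = v y`.
-/

section FrobTwist

variable {R S : Type*} [CommRing R] [CommRing S] {Q : ℕ}

theorem coeff_frobTwist (hQ : Q ≠ 0) (P : R[X]) (j : ℕ) :
    (frobTwist Q P).coeff j = P.coeff j ^ Q := by
  simp only [frobTwist, finsetSum_coeff, coeff_C_mul_X_pow, Finset.sum_ite_eq, Finset.mem_range,
    Nat.lt_succ_iff]
  split_ifs with hj
  · rfl
  · rw [coeff_eq_zero_of_natDegree_lt (not_le.1 hj), zero_pow hQ]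

theorem natDegree_frobTwist [IsReduced R] (hQ : Q ≠ 0) (P : R[X]) :
    (frobTwist Q P).natDegree = P.natDegree := by
  have hsupp : (frobTwist Q P).support = P.support := by
    ext j
    rw [mem_support_iff, mem_support_iff, coeff_frobTwist hQ, ne_eq, pow_eq_zero_iff hQ]
  simp only [natDegree, degree, hsupp]

theorem map_frobTwist (hQ : Q ≠ 0) (φ : R →+* S) (P : R[X]) :
    (frobTwist Q P).map φ = frobTwist Q (P.map φ) := by
  ext j
  simp only [coeff_map, coeff_frobTwist hQ, map_pow]

theorem map_iterTwist (hQ : Q ≠ 0) (φ : R →+* S) (V : R[X]) (n : ℕ) :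
    (iterTwist Q V n).map φ = iterTwist Q (V.map φ) n := by
  induction n with
  | zero => exact map_X φ
  | succ n ih => rw [iterTwist, iterTwist, Polynomial.map_comp, map_frobTwist hQ, ih]

theorem coeff_zero_iterTwist (hQ : Q ≠ 0) {V : R[X]} (hV : V.coeff 0 = 0) (n : ℕ) :
    (iterTwist Q V n).coeff 0 = 0 := by
  induction n with
  | zero => exact coeff_X_zero
  | succ n ih =>
    rw [iterTwist, coeff_zero_eq_eval_zero, eval_comp, ← coeff_zero_eq_eval_zero,
      coeff_frobTwist hQ, ih, zero_pow hQ, ← coeff_zero_eq_eval_zero, hV]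

theorem natDegree_iterTwist [IsDomain R] (hQ : Q ≠ 0) (V : R[X]) (n : ℕ) :
    (iterTwist Q V n).natDegree = V.natDegree ^ n := by
  induction n with
  | zero => exact natDegree_X
  | succ n ih => rw [iterTwist, natDegree_comp, natDegree_frobTwist hQ, ih, pow_succ']

end FrobTwist

/-- `P` is a unit times the monomial `X ^ P.natDegree` modulo `{x | v x ≤ t}`: its leading
coefficient has value `1` and all lower coefficients have value at most `t`. This is the
condition on Newton polygons that survives twisting and composition. -/
structure HasMonomialReduction {R Γ₀ : Type*} [CommRing R] [LinearOrderedCommMonoidWithZero Γ₀]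
    (v : Valuation R Γ₀) (t : Γ₀) (P : R[X]) : Prop where
  valuation_leadingCoeff : v P.leadingCoeff = 1
  valuation_coeff_le : ∀ j < P.natDegree, v (P.coeff j) ≤ t

namespace HasMonomialReduction

section Closure

variable {R S Γ₀ : Type*} [CommRing R] [CommRing S] [LinearOrderedCommMonoidWithZero Γ₀]
  {v : Valuation R Γ₀} {s t : Γ₀} {P W : R[X]}

theorem mono (hP : HasMonomialReduction v s P) (hst : s ≤ t) : HasMonomialReduction v t P :=
  ⟨hP.valuation_leadingCoeff, fun j hj ↦ (hP.valuation_coeff_le j hj).trans hst⟩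

theorem valuation_coeff_le_one (hP : HasMonomialReduction v t P) (ht : t ≤ 1) (j : ℕ) :
    v (P.coeff j) ≤ 1 := by
  rcases lt_trichotomy j P.natDegree with hj | rfl | hj
  · exact (hP.valuation_coeff_le j hj).trans ht
  · exact hP.valuation_leadingCoeff.le
  · rw [coeff_eq_zero_of_natDegree_lt hj, map_zero]
    exact zero_le

theorem one : HasMonomialReduction v t (1 : R[X]) :=
  ⟨by rw [leadingCoeff_one, map_one], fun j hj ↦ by simp at hj⟩

theorem X [Nontrivial R] : HasMonomialReduction v t (Polynomial.X : R[X]) := by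
  refine ⟨by rw [leadingCoeff_X, map_one], fun j hj ↦ ?_⟩
  rw [natDegree_X, Nat.lt_one_iff] at hj
  rw [hj, coeff_X_zero, map_zero]
  exact zero_le

theorem mul [NoZeroDivisors R] (ht : t ≤ 1) (hP : HasMonomialReduction v t P)
    (hW : HasMonomialReduction v t W) : HasMonomialReduction v t (P * W) := by
  refine ⟨?_, fun j hj ↦ ?_⟩
  · rw [leadingCoeff_mul, map_mul, hP.valuation_leadingCoeff, hW.valuation_leadingCoeff, one_mul]
  have hj := hj.trans_le natDegree_mul_le
  rw [coeff_mul]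
  refine v.map_sum_le fun x hx ↦ ?_
  rw [Finset.HasAntidiagonal.mem_antidiagonal] at hx
  rw [map_mul]
  rcases lt_or_ge x.1 P.natDegree with h1 | h1
  · exact (mul_le_mul' (hP.valuation_coeff_le _ h1) (hW.valuation_coeff_le_one ht _)).trans_eq
      (mul_one t)
  · exact (mul_le_mul' (hP.valuation_coeff_le_one ht _)
      (hW.valuation_coeff_le _ (by omega))).trans_eq (one_mul t)

theorem pow [NoZeroDivisors R] (ht : t ≤ 1) (hP : HasMonomialReduction v t P) (m : ℕ) :
    HasMonomialReduction v t (P ^ m) := by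
  induction m with
  | zero => exact pow_zero P ▸ one
  | succ m ih => exact pow_succ P m ▸ ih.mul ht hP

theorem comp [NoZeroDivisors R] (ht : t ≤ 1) (hP : HasMonomialReduction v t P)
    (hW : HasMonomialReduction v t W) (hW0 : W.natDegree ≠ 0) :
    HasMonomialReduction v t (P.comp W) := by
  refine ⟨?_, fun j hj ↦ ?_⟩
  · rw [leadingCoeff_comp hW0, map_mul, map_pow, hP.valuation_leadingCoeff,
      hW.valuation_leadingCoeff, one_pow, one_mul]
  rw [natDegree_comp] at hj
  simp only [Polynomial.comp, eval₂_eq_sum_range, finsetSum_coeff, coeff_C_mul]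
  refine v.map_sum_le fun i hi ↦ ?_
  rw [map_mul]
  rcases (Nat.lt_succ_iff.1 (Finset.mem_range.1 hi)).lt_or_eq with hi | rfl
  · exact (mul_le_mul' (hP.valuation_coeff_le i hi)
      ((hW.pow ht i).valuation_coeff_le_one ht j)).trans_eq (mul_one t)
  · exact (mul_le_mul' hP.valuation_leadingCoeff.le
      ((hW.pow ht _).valuation_coeff_le j (by rwa [natDegree_pow]))).trans_eq (one_mul t)

theorem frobTwist [IsReduced R] (ht : t ≤ 1) {Q : ℕ} (hQ : Q ≠ 0)
    (hP : HasMonomialReduction v t P) : HasMonomialReduction v t (frobTwist Q P) := by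
  refine ⟨?_, fun j hj ↦ ?_⟩
  · rw [leadingCoeff, natDegree_frobTwist hQ, coeff_frobTwist hQ, map_pow, coeff_natDegree,
      hP.valuation_leadingCoeff, one_pow]
  · rw [natDegree_frobTwist hQ] at hj
    have hle := hP.valuation_coeff_le j hj
    rw [coeff_frobTwist hQ, map_pow]
    exact (pow_le_of_le_one zero_le (hle.trans ht) hQ).trans hle

theorem iterTwist [IsDomain R] (ht : t ≤ 1) {Q : ℕ} (hQ : Q ≠ 0)
    (hP : HasMonomialReduction v t P) (hP0 : P.natDegree ≠ 0) (n : ℕ) :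
    HasMonomialReduction v t (iterTwist Q P n) := by
  induction n with
  | zero => exact X
  | succ n ih =>
    refine hP.comp ht (ih.frobTwist ht hQ) ?_
    rw [natDegree_frobTwist hQ, natDegree_iterTwist hQ]
    exact pow_ne_zero n hP0

theorem sub_C (hP : HasMonomialReduction v t P) (hP0 : P.natDegree ≠ 0) {c : R}
    (hc : v c ≤ t) : HasMonomialReduction v t (P - C c) := by
  refine ⟨?_, fun j hj ↦ ?_⟩
  · rw [leadingCoeff, natDegree_sub_C, coeff_sub, coeff_C_of_ne_zero hP0, sub_zero]
    exact hP.valuation_leadingCoeff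
  · rw [natDegree_sub_C] at hj
    rw [coeff_sub]
    refine (v.map_sub _ _).trans (max_le (hP.valuation_coeff_le j hj) ?_)
    rw [coeff_C]
    split_ifs
    · exact hc
    · rw [map_zero]
      exact zero_le

theorem divX (hP : HasMonomialReduction v t P) (hP0 : P.natDegree ≠ 0) :
    HasMonomialReduction v t P.divX := by
  refine ⟨?_, fun j hj ↦ ?_⟩
  · rw [leadingCoeff, natDegree_divX_eq_natDegree_tsub_one, coeff_divX,
      Nat.sub_add_cancel (Nat.one_le_iff_ne_zero.2 hP0)]
    exact hP.valuation_leadingCoeff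
  · rw [natDegree_divX_eq_natDegree_tsub_one] at hj
    rw [coeff_divX]
    exact hP.valuation_coeff_le _ (by omega)

theorem natDegree_map [Nontrivial Γ₀] {w : Valuation S Γ₀} {φ : R →+* S}
    (hP : HasMonomialReduction (w.comap φ) t P) : (P.map φ).natDegree = P.natDegree := by
  refine natDegree_map_of_leadingCoeff_ne_zero φ fun h ↦ zero_ne_one (α := Γ₀) ?_
  rw [← hP.valuation_leadingCoeff, Valuation.comap_apply, h, map_zero]

theorem map [Nontrivial Γ₀] {w : Valuation S Γ₀} {φ : R →+* S}
    (hP : HasMonomialReduction (w.comap φ) t P) : HasMonomialReduction w t (P.map φ) := by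
  refine ⟨?_, fun j hj ↦ ?_⟩
  · rw [leadingCoeff, hP.natDegree_map, coeff_map]
    exact hP.valuation_leadingCoeff
  · rw [hP.natDegree_map] at hj
    rw [coeff_map]
    exact hP.valuation_coeff_le j hj

end Closure

section Roots

variable {R Γ₀ : Type*} [CommRing R] [LinearOrderedCommGroupWithZero Γ₀]
  {v : Valuation R Γ₀} {t : Γ₀} {P W : R[X]} {z : R}

theorem valuation_lt_one_of_isRoot (hP : HasMonomialReduction v t P) (ht : t < 1)
    (hz : P.IsRoot z) : v z < 1 := by
  by_contra! hz1
  have hpos : 0 < v z ^ P.natDegree := pow_pos (zero_lt_one.trans_le hz1) _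
  have hlead : v (P.coeff P.natDegree * z ^ P.natDegree) = v z ^ P.natDegree := by
    rw [map_mul, map_pow, coeff_natDegree, hP.valuation_leadingCoeff, one_mul]
  have hlower : v (∑ j ∈ Finset.range P.natDegree, P.coeff j * z ^ j) < v z ^ P.natDegree := by
    refine v.map_sum_lt hpos.ne' fun j hj ↦ ?_
    have hj := Finset.mem_range.1 hj
    calc v (P.coeff j * z ^ j) = v (P.coeff j) * v z ^ j := by rw [map_mul, map_pow]
      _ ≤ t * v z ^ P.natDegree :=
        mul_le_mul' (hP.valuation_coeff_le j hj) (pow_le_pow_right₀ hz1 hj.le)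
      _ < v z ^ P.natDegree := mul_lt_of_lt_one_left hpos ht
  have heval : v (P.eval z) = v z ^ P.natDegree := by
    rw [eval_eq_sum_range, Finset.sum_range_succ, v.map_add_eq_of_lt_right (hlower.trans_eq
      hlead.symm), hlead]
  rw [hz.eq_zero, map_zero] at heval
  exact hpos.ne heval

/-- The Newton polygon of an Eisenstein polynomial is a single segment. -/
theorem valuation_pow_natDegree_of_isRoot (hP : HasMonomialReduction v (v (P.coeff 0)) P)
    (h0 : v (P.coeff 0) ≠ 0) (h1 : v (P.coeff 0) < 1) (hz : P.IsRoot z) :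
    v z ^ P.natDegree = v (P.coeff 0) := by
  have hz1 : v z < 1 := hP.valuation_lt_one_of_isRoot h1 hz
  have hdeg : P.natDegree ≠ 0 := fun h ↦ by
    rw [← h, coeff_natDegree, hP.valuation_leadingCoeff] at h1
    exact h1.false
  have hlower : v (∑ j ∈ Finset.range P.natDegree, P.coeff j * z ^ j) = v (P.coeff 0) := by
    have hconst : v (P.coeff 0 * z ^ 0) = v (P.coeff 0) := by rw [pow_zero, mul_one]
    rw [← hconst]
    refine v.map_sum_eq_of_lt (f := fun j ↦ P.coeff j * z ^ j)
      (Finset.mem_range.2 (Nat.pos_of_ne_zero hdeg)) fun j hj ↦ ?_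
    simp only [Finset.mem_sdiff, Finset.mem_range, Finset.mem_singleton] at hj
    calc v (P.coeff j * z ^ j) = v (P.coeff j) * v z ^ j := by rw [map_mul, map_pow]
      _ ≤ v (P.coeff 0) * v z ^ j := mul_le_mul_left (hP.valuation_coeff_le j hj.1) _
      _ < v (P.coeff 0) :=
        mul_lt_of_lt_one_right (zero_lt_iff.2 h0) (pow_lt_one₀ zero_le hz1 hj.2)
      _ = v (P.coeff 0 * z ^ 0) := hconst.symm
  have heval : ∑ j ∈ Finset.range P.natDegree, P.coeff j * z ^ j =
      -(P.leadingCoeff * z ^ P.natDegree) := by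
    rw [eq_neg_iff_add_eq_zero, ← coeff_natDegree, ← Finset.sum_range_succ, ← eval_eq_sum_range,
      hz.eq_zero]
  rw [← hlower, heval, v.map_neg, map_mul, map_pow, hP.valuation_leadingCoeff, one_mul]

theorem valuation_pow_natDegree_eq_valuation_eval (hW : HasMonomialReduction v t W)
    (hW0 : W.coeff 0 = 0) (hne : v (W.eval z) ≠ 0) (hle : t ≤ v (W.eval z))
    (hlt : v (W.eval z) < 1) : v z ^ W.natDegree = v (W.eval z) := by
  have hdeg : W.natDegree ≠ 0 := fun h ↦ hne <| by
    rw [eq_C_of_natDegree_eq_zero h, eval_C, hW0, map_zero]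
  have hconst : v ((W - C (W.eval z)).coeff 0) = v (W.eval z) := by
    rw [coeff_sub, hW0, coeff_C_zero, zero_sub, v.map_neg]
  have hroot : (W - C (W.eval z)).IsRoot z := by
    rw [IsRoot.def, eval_sub, eval_C, sub_self]
  rw [← natDegree_sub_C (a := W.eval z), ← hconst]
  rw [← hconst] at hne hle hlt
  exact ((hW.mono hle).sub_C hdeg hconst.ge).valuation_pow_natDegree_of_isRoot hne hlt hroot

end Roots

end HasMonomialReduction

/-- The Newton polygon of a Verschiebung polynomial: `V` has degree `D` and no constant term,
its linear coefficient has value `t`, its leading coefficient has value `1`, and the remaining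
ones have value at most `t`. For `t < 1`, `V` is `X` times an Eisenstein polynomial. -/
structure IsVerschiebungLike {R Γ₀ : Type*} [CommRing R] [LinearOrderedCommMonoidWithZero Γ₀]
    (v : Valuation R Γ₀) (t : Γ₀) (D : ℕ) (V : R[X]) : Prop
    extends HasMonomialReduction v t V where
  natDegree_eq : V.natDegree = D
  coeff_zero : V.coeff 0 = 0
  valuation_coeff_one : v (V.coeff 1) = t

theorem exists_isRoot_divX_eval_of_splits_comp {L : Type*} [Field L] {V W : L[X]}
    (hV0 : V.coeff 0 = 0) (hV : 1 < V.natDegree) (hW : W.natDegree ≠ 0)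
    (hs : (V.comp W).Splits) : ∃ z, V.divX.IsRoot (W.eval z) := by
  have hne : V.comp W ≠ 0 :=
    ne_zero_of_natDegree_gt (n := 0) (natDegree_comp (p := V) (q := W) ▸ by positivity)
  have hdvd : V.divX.comp W ∣ V.comp W := by
    conv_rhs => rw [← divX_mul_X_add V, hV0, C_0, add_zero, mul_comp]
    exact dvd_mul_right _ _
  have hdeg : (V.divX.comp W).natDegree ≠ 0 := by
    rw [natDegree_comp, natDegree_divX_eq_natDegree_tsub_one]
    exact mul_ne_zero (Nat.sub_pos_of_lt hV).ne' hW
  obtain ⟨z, hz⟩ := (hs.of_dvd hne hdvd).exists_eval_eq_zero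
    fun h ↦ hdeg (natDegree_eq_of_degree_eq_some h)
  exact ⟨z, by rwa [eval_comp] at hz⟩

namespace IsVerschiebungLike

variable {R S L Γ₀ : Type*} [CommRing R] [CommRing S] [Field L]
  [LinearOrderedCommGroupWithZero Γ₀] {t : Γ₀} {D : ℕ}

theorem map {w : Valuation S Γ₀} {φ : R →+* S} {V : R[X]}
    (hV : IsVerschiebungLike (w.comap φ) t D V) : IsVerschiebungLike w t D (V.map φ) where
  toHasMonomialReduction := hV.toHasMonomialReduction.map
  natDegree_eq := hV.natDegree_map.trans hV.natDegree_eq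
  coeff_zero := by rw [coeff_map, hV.coeff_zero, map_zero]
  valuation_coeff_one := by rw [coeff_map]; exact hV.valuation_coeff_one

theorem eval_eq_eval_divX_mul {v : Valuation R Γ₀} {V : R[X]} (hV : IsVerschiebungLike v t D V)
    (y : R) : V.eval y = V.divX.eval y * y := by
  conv_lhs => rw [← divX_mul_X_add V, hV.coeff_zero, C_0, add_zero, eval_mul_X]

theorem one_lt_natDegree {v : Valuation R Γ₀} {V : R[X]} (hV : IsVerschiebungLike v t D V)
    (ht0 : t ≠ 0) (ht1 : t < 1) : 1 < V.natDegree := by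
  have h1 : 1 ≤ V.natDegree := by
    refine le_natDegree_of_ne_zero fun h ↦ ht0 ?_
    rw [← hV.valuation_coeff_one, h, map_zero]
  refine h1.lt_of_ne fun h ↦ ht1.ne ?_
  rw [← hV.valuation_coeff_one, h, coeff_natDegree, hV.valuation_leadingCoeff]

theorem valuation_pow_of_isRoot_divX {v : Valuation R Γ₀} {V : R[X]}
    (hV : IsVerschiebungLike v t D V) (ht0 : t ≠ 0) (ht1 : t < 1) {y : R}
    (hy : V.divX.IsRoot y) : v y ^ (D - 1) = t := by
  have hconst : v (V.divX.coeff 0) = t := by rw [coeff_divX, zero_add, hV.valuation_coeff_one]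
  have hE : HasMonomialReduction v t V.divX :=
    hV.toHasMonomialReduction.divX (Nat.ne_zero_of_lt (hV.one_lt_natDegree ht0 ht1))
  rw [← hV.natDegree_eq, ← natDegree_divX_eq_natDegree_tsub_one]
  rw [← hconst] at hE ht0 ht1 ⊢
  exact hE.valuation_pow_natDegree_of_isRoot ht0 ht1 hy

theorem valuation_pow_of_isRoot [IsDomain R] {v : Valuation R Γ₀} {V : R[X]}
    (hV : IsVerschiebungLike v t D V) (ht0 : t ≠ 0) (ht1 : t < 1) {z : R} (hz0 : z ≠ 0)
    (hz : V.IsRoot z) : v z ^ (D - 1) = t := by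
  refine hV.valuation_pow_of_isRoot_divX ht0 ht1 ?_
  rw [IsRoot.def, hV.eval_eq_eval_divX_mul] at hz
  exact (mul_eq_zero.1 hz).resolve_right hz0

theorem exists_isRoot_iterTwist {v : Valuation L Γ₀} {V : L[X]}
    (hV : IsVerschiebungLike v t D V) (ht0 : t ≠ 0) (ht1 : t < 1) {Q : ℕ} (hQ : Q ≠ 0) (n : ℕ)
    (hs : (iterTwist Q V (n + 1)).Splits) :
    ∃ z ≠ 0, (iterTwist Q V (n + 1)).IsRoot z ∧ v z ^ ((D - 1) * D ^ n) = t := by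
  have hD : 1 < V.natDegree := hV.one_lt_natDegree ht0 ht1
  have hD0 : V.natDegree ≠ 0 := Nat.ne_zero_of_lt hD
  set W := frobTwist Q (iterTwist Q V n) with hWdef
  have hWred : HasMonomialReduction v t W :=
    (hV.toHasMonomialReduction.iterTwist ht1.le hQ hD0 n).frobTwist ht1.le hQ
  have hWdeg : W.natDegree = D ^ n := by
    rw [natDegree_frobTwist hQ, natDegree_iterTwist hQ, hV.natDegree_eq]
  have hWdeg0 : W.natDegree ≠ 0 := by
    rw [hWdeg, ← hV.natDegree_eq]
    exact pow_ne_zero n hD0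
  have hW0 : W.coeff 0 = 0 := by
    rw [coeff_frobTwist hQ, coeff_zero_iterTwist hQ hV.coeff_zero, zero_pow hQ]
  obtain ⟨z, hz⟩ := exists_isRoot_divX_eval_of_splits_comp hV.coeff_zero hD hWdeg0 hs
  have hy : v (W.eval z) ^ (D - 1) = t := hV.valuation_pow_of_isRoot_divX ht0 ht1 hz
  have hD1 : D - 1 ≠ 0 := by have := hV.natDegree_eq; omega
  have hy1 : v (W.eval z) < 1 := (pow_lt_one_iff_of_nonneg zero_le hD1).1 (hy.trans_lt ht1)
  have hyt : t ≤ v (W.eval z) := hy.symm.trans_le (pow_le_of_le_one zero_le hy1.le hD1)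
  have hy0 : v (W.eval z) ≠ 0 := ((zero_lt_iff.2 ht0).trans_le hyt).ne'
  refine ⟨z, ?_, ?_, ?_⟩
  · rintro rfl
    rw [← coeff_zero_eq_eval_zero, hW0, map_zero] at hy0
    exact hy0 rfl
  · rw [iterTwist, IsRoot.def, eval_comp, ← hWdef, hV.eval_eq_eval_divX_mul, hz.eq_zero, zero_mul]
  · rw [mul_comm, pow_mul, ← hWdeg,
      hWred.valuation_pow_natDegree_eq_valuation_eval hW0 hy0 hyt hy1, hy]

end IsVerschiebungLike

/-- The `q`-linearized polynomial `∑ i ≤ d, a i * X ^ q ^ i`, the shape of the Verschiebung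
polynomial of a Drinfeld module. -/
noncomputable def linearizedPolynomial {R : Type*} [CommRing R] (q d : ℕ) (a : ℕ → R) : R[X] :=
  ∑ i ∈ Finset.range (d + 1), C (a i) * X ^ q ^ i

section LinearizedPolynomial

variable {R Γ₀ : Type*} [CommRing R] [LinearOrderedCommMonoidWithZero Γ₀] {q d : ℕ} {a : ℕ → R}

theorem coeff_linearizedPolynomial_pow (hq : 1 < q) {i : ℕ} (hi : i ≤ d) :
    (linearizedPolynomial q d a).coeff (q ^ i) = a i := by
  simp only [linearizedPolynomial, finsetSum_coeff, coeff_C_mul_X_pow,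
    Nat.pow_right_inj hq, Finset.sum_ite_eq, Finset.mem_range, Nat.lt_succ_iff, hi, if_true]

theorem coeff_linearizedPolynomial_of_forall_ne {n : ℕ} (hn : ∀ i ≤ d, n ≠ q ^ i) :
    (linearizedPolynomial q d a).coeff n = 0 := by
  rw [linearizedPolynomial, finsetSum_coeff]
  refine Finset.sum_eq_zero fun i hi ↦ ?_
  rw [coeff_C_mul_X_pow, if_neg (hn i (Nat.lt_succ_iff.1 (Finset.mem_range.1 hi)))]

theorem natDegree_linearizedPolynomial (hq : 1 < q) (had : a d ≠ 0) :
    (linearizedPolynomial q d a).natDegree = q ^ d := by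
  refine natDegree_eq_of_le_of_coeff_ne_zero ?_ ?_
  · refine natDegree_le_iff_coeff_eq_zero.2 fun n hn ↦
      coeff_linearizedPolynomial_of_forall_ne fun i hi ↦ ?_
    exact ((Nat.pow_le_pow_right hq.le hi).trans_lt hn).ne'
  · rwa [coeff_linearizedPolynomial_pow hq le_rfl]

theorem isVerschiebungLike_linearizedPolynomial [Nontrivial Γ₀] {v : Valuation R Γ₀}
    (hq : 1 < q) (hle : ∀ i < d, v (a i) ≤ v (a 0)) (had : v (a d) = 1) :
    IsVerschiebungLike v (v (a 0)) (q ^ d) (linearizedPolynomial q d a) := by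
  have hdeg : (linearizedPolynomial q d a).natDegree = q ^ d := by
    refine natDegree_linearizedPolynomial hq fun h ↦ zero_ne_one (α := Γ₀) ?_
    rw [← had, h, map_zero]
  refine ⟨⟨?_, fun n hn ↦ ?_⟩, hdeg, ?_, ?_⟩
  · rw [leadingCoeff, hdeg, coeff_linearizedPolynomial_pow hq le_rfl, had]
  · by_cases h : ∀ i ≤ d, n ≠ q ^ i
    · rw [coeff_linearizedPolynomial_of_forall_ne h, map_zero]
      exact zero_le
    · push Not at h
      obtain ⟨i, hi, rfl⟩ := h
      rw [coeff_linearizedPolynomial_pow hq hi]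
      exact hle i ((Nat.pow_lt_pow_iff_right hq).1 (hn.trans_eq hdeg))
  · exact coeff_linearizedPolynomial_of_forall_ne fun i _ ↦ (pow_pos (by omega) i).ne
  · rw [← pow_zero q, coeff_linearizedPolynomial_pow hq (Nat.zero_le d)]

theorem isVerschiebungLike_linearizedPolynomial_laurentSeries {k Γ₀ : Type*} [Field k]
    [LinearOrderedCommGroupWithZero Γ₀] {v : Valuation (LaurentSeries k) Γ₀} {t : Γ₀}
    (ht0 : 0 < t) (ht1 : t ≤ 1) (hv : ∀ f : LaurentSeries k, f ≠ 0 → v f = t ^ f.order)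
    {a : ℕ → LaurentSeries k} (hq : 1 < q) (ha0 : a 0 ≠ 0) (ha0ord : (a 0).order = 1)
    (hamid : ∀ i, 0 < i → i < d → a i = 0 ∨ 1 ≤ (a i).order)
    (had : a d ≠ 0) (hadord : (a d).order = 0) :
    IsVerschiebungLike v t (q ^ d) (linearizedPolynomial q d a) := by
  have hv0 : v (a 0) = t := by rw [hv _ ha0, ha0ord, zpow_one]
  have hvd : v (a d) = 1 := by rw [hv _ had, hadord, zpow_zero]
  have hle_of_order : ∀ f, f = 0 ∨ 1 ≤ f.order → v f ≤ t := by
    intro f hf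
    rcases eq_or_ne f 0 with rfl | hf0
    · exact (map_zero v).trans_le zero_le
    · rw [hv f hf0]
      exact (zpow_le_zpow_right_of_le_one₀ ht0 ht1 (hf.resolve_left hf0)).trans_eq (zpow_one t)
  rw [← hv0] at hle_of_order ⊢
  refine isVerschiebungLike_linearizedPolynomial hq (fun i hi ↦ ?_) hvd
  rcases Nat.eq_zero_or_pos i with rfl | hi0
  · exact le_rfl
  · exact hle_of_order _ (hamid i hi0 hi)

end LinearizedPolynomial

theorem verschiebung_newton_polygon_general {K L Γ₀ : Type*} [CommRing K] [Field L] [Algebra K L]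
    [LinearOrderedCommGroupWithZero Γ₀] (w : Valuation L Γ₀) {t : Γ₀} (ht0 : 0 < t) (ht1 : t < 1)
    {D : ℕ} {V : K[X]} (hV : IsVerschiebungLike (w.comap (algebraMap K L)) t D V)
    {Q : ℕ} (hQ : Q ≠ 0) :
    (∀ z : L, z ≠ 0 → aeval z V = 0 → w z ^ (D - 1) = t) ∧
    (∀ n : ℕ, 1 ≤ n → ((iterTwist Q V n).map (algebraMap K L)).Splits →
      ∃ z : L, z ≠ 0 ∧ aeval z (iterTwist Q V n) = 0 ∧ w z ^ ((D - 1) * D ^ (n - 1)) = t) := by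
  simp only [← eval_map_algebraMap, map_iterTwist hQ]
  refine ⟨fun z hz0 hz ↦ hV.map.valuation_pow_of_isRoot ht0.ne' ht1 hz0 hz, fun n hn hs ↦ ?_⟩
  obtain ⟨m, rfl⟩ := Nat.exists_eq_add_of_le' hn
  exact hV.map.exists_isRoot_iterTwist ht0.ne' ht1 hQ m hs

/-- Newton-polygon valuations of roots of the Verschiebung polynomial
`V(X) = Σ_{i=0}^{d} a_i X^{q^i}` over `F = k((u))` with `v(a₀) = 1`, `v(a_i) ≥ 1`
(`1 ≤ i ≤ d−1`), `v(a_d) = 0`: (a) every nonzero root `z` of `V` in a valued extension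
`(L, w)` compatible with the `u`-adic order satisfies `w(z)^{q^d−1} = w(u)`; (b) if `L`
splits the `n`-th twisted iterate `V^{[n]}`, then some nonzero root `z'` of `V^{[n]}`
satisfies `w(z')^{(q^d−1)q^{d(n−1)}} = w(u)`. -/
theorem verschiebung_newton_polygon {k : Type*} [Field k]
    (q d : ℕ) (hq : IsPrimePow q) (hd : 1 ≤ d)
    (a : ℕ → LaurentSeries k)
    (ha0 : a 0 ≠ 0) (ha0ord : (a 0).order = 1)
    (hamid : ∀ i, 1 ≤ i → i ≤ d - 1 → a i = 0 ∨ 1 ≤ (a i).order)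
    (had : a d ≠ 0) (hadord : (a d).order = 0)
    {L : Type*} [Field L] [Algebra (LaurentSeries k) L]
    {Γ₀ : Type*} [LinearOrderedCommGroupWithZero Γ₀] (w : Valuation L Γ₀)
    (hwu0 : 0 < w (algebraMap (LaurentSeries k) L (HahnSeries.single (1 : ℤ) (1 : k))))
    (hwu1 : w (algebraMap (LaurentSeries k) L (HahnSeries.single (1 : ℤ) (1 : k))) < 1)
    (hwcompat : ∀ f : LaurentSeries k, f ≠ 0 →
      w (algebraMap (LaurentSeries k) L f)
        = w (algebraMap (LaurentSeries k) L (HahnSeries.single (1 : ℤ) (1 : k))) ^ f.order) :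
    (∀ z : L, z ≠ 0 →
      Polynomial.aeval z (∑ i ∈ Finset.range (d + 1),
        Polynomial.C (a i) * Polynomial.X ^ q ^ i) = 0 →
      w z ^ (q ^ d - 1)
        = w (algebraMap (LaurentSeries k) L (HahnSeries.single (1 : ℤ) (1 : k)))) ∧
    (∀ n : ℕ, 1 ≤ n →
      Polynomial.Splits (Polynomial.map (algebraMap (LaurentSeries k) L)
        (iterTwist (q ^ d) (∑ i ∈ Finset.range (d + 1),
          Polynomial.C (a i) * Polynomial.X ^ q ^ i) n)) →
      ∃ z' : L, z' ≠ 0 ∧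
        Polynomial.aeval z' (iterTwist (q ^ d) (∑ i ∈ Finset.range (d + 1),
          Polynomial.C (a i) * Polynomial.X ^ q ^ i) n) = 0 ∧
        w z' ^ ((q ^ d - 1) * q ^ (d * (n - 1)))
          = w (algebraMap (LaurentSeries k) L (HahnSeries.single (1 : ℤ) (1 : k)))) := by
  have hV := isVerschiebungLike_linearizedPolynomial_laurentSeries
    (v := w.comap (algebraMap (LaurentSeries k) L)) hwu0 hwu1.le hwcompat hq.one_lt ha0 ha0ord
    (fun i hi hid ↦ hamid i hi (Nat.le_sub_one_of_lt hid)) had hadord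
  simpa only [linearizedPolynomial, ← pow_mul] using
    verschiebung_newton_polygon_general w hwu0 hwu1 hV (pow_ne_zero d hq.pos.ne')
end

section
/- Let R be a commutative 𝔽_q[t]-algebra and let f ∈ 𝔽_q[t] be monic of degree e ≥ 1, with image f̄ ∈ R. In the Laurent series ring R((w)), the element Φ^C_f(w^{−1}) (whose lowest-order term is w^{−q^e} with coefficient 1) is invertible; let x ∈ R((w)) denote its inverse. Then in the module of Kähler differentials Ω¹_{R((w))/R} one has the identity w²·dx = f̄·x²·dw. -/
/-!
Put `u = w⁻¹`, `y = Φ^C_f(u)` and `x = y⁻¹`. Differentiating inverses gives `dx = -x² dy` and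
`du = -u² dw`, so `w² dx = x² (Φ^C_f)'(u) dw`. As `q = 0` in `𝔽_q`, the derivative of `t Z + Z ^ q`
is the constant `t`, and the chain rule turns composition into multiplication, so `(Φ^C_f)' = f`.
For invertibility, `w ^ deg P * P(w⁻¹)` is a power series in `w` whose constant coefficient is the
leading coefficient of `P`, and that of `Φ^C_f` is a nonzero constant.
-/

open Polynomial

/-- The Laurent series `Φ^C_f(w^{−1}) = Σ_j c_j w^{−j} ∈ R((w))` attached to the Carlitz
polynomial `Φ^C_f(Z) = Σ_j c_j Z^j` (supported on `q`-power exponents `j ≤ q^e`). -/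
noncomputable def carlitzAtInvW {Fq : Type*} [Field Fq] (R : Type*) [CommRing R]
    [Algebra (Polynomial Fq) R] (Φ : Fq[X] → Polynomial (Fq[X])) (f : Fq[X]) (N : ℕ) :
    LaurentSeries R :=
  ∑ j ∈ Finset.range (N + 1),
    HahnSeries.single (-(j : ℤ)) (algebraMap Fq[X] R ((Φ f).coeff j))

section LaurentPolynomial

variable {R : Type*} [CommSemiring R]

theorem single_neg_one_mul_single_one :
    HahnSeries.single (-1 : ℤ) (1 : R) * HahnSeries.single (1 : ℤ) (1 : R) = 1 := by
  rw [HahnSeries.single_mul_single, neg_add_cancel, one_mul, HahnSeries.single_zero_one]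

-- Instance search finds `HahnSeries.powerSeriesAlgebra` for `Algebra R (LaurentSeries R)`, and
-- `HahnSeries.algebraMap_apply` is about the coefficientwise structure `HahnSeries.instAlgebra`.
theorem algebraMap_laurentSeries_apply (r : R) :
    algebraMap R (LaurentSeries R) r = HahnSeries.C r := by
  rw [HahnSeries.algebraMap_apply', PowerSeries.algebraMap_eq, HahnSeries.ofPowerSeries_C]

theorem aeval_single_one_eq_coe (P : R[X]) :
    aeval (HahnSeries.single (1 : ℤ) (1 : R) : LaurentSeries R) P =
      HahnSeries.ofPowerSeries ℤ R P := by
  induction P using Polynomial.induction_on' with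
  | add P Q hP hQ => rw [map_add, hP, hQ, Polynomial.coe_add, map_add]
  | monomial n r =>
    rw [← C_mul_X_pow_eq_monomial, map_mul, aeval_C, map_pow, aeval_X,
      algebraMap_laurentSeries_apply, Polynomial.coe_mul, Polynomial.coe_C, Polynomial.coe_pow,
      Polynomial.coe_X, map_mul, map_pow, HahnSeries.ofPowerSeries_C, HahnSeries.ofPowerSeries_X]

end LaurentPolynomial

theorem isUnit_aeval_single_neg_one {R : Type*} [CommRing R] {P : R[X]}
    (hP : IsUnit P.leadingCoeff) :
    IsUnit (aeval (HahnSeries.single (-1 : ℤ) (1 : R) : LaurentSeries R) P) := by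
  let _ : Invertible (HahnSeries.single (-1 : ℤ) (1 : R)) :=
    ⟨HahnSeries.single (1 : ℤ) (1 : R), by rw [mul_comm, single_neg_one_mul_single_one],
      single_neg_one_mul_single_one⟩
  have hrev : IsUnit (aeval (HahnSeries.single (1 : ℤ) (1 : R) : LaurentSeries R) P.reverse) := by
    rw [aeval_single_one_eq_coe]
    refine IsUnit.map _ (PowerSeries.isUnit_iff_constantCoeff.mpr ?_)
    rwa [Polynomial.constantCoeff_coe, coeff_zero_reverse]
  rw [aeval_def, ← eval₂_reverse_mul_pow]
  exact hrev.mul ((isUnit_of_invertible _).pow _)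

theorem isUnit_leadingCoeff_map {A R : Type*} [Semiring A] [Semiring R] (φ : A →+* R) {P : A[X]}
    (hP : IsUnit P.leadingCoeff) : IsUnit (P.map φ).leadingCoeff := by
  cases subsingleton_or_nontrivial R
  · exact isUnit_of_subsingleton _
  · rw [leadingCoeff_map_eq_of_isUnit_leadingCoeff φ hP]
    exact hP.map φ

theorem sq_smul_derivation_inv_aeval {R B M : Type*} [CommRing R] [CommRing B] [Algebra R B]
    [AddCommGroup M] [Module R M] [Module B M] (D : Derivation R B M) (P : R[X]) {u w x : B}
    (huw : u * w = 1) (hx : aeval u P * x = 1) :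
    w ^ 2 • D x = (aeval u (derivative P) * x ^ 2) • D w := by
  have hDu : D u = -u ^ 2 • D w := D.leibniz_of_mul_eq_one huw
  have hDx : D x = -x ^ 2 • D (aeval u P) := D.leibniz_of_mul_eq_one (by rw [mul_comm, hx])
  calc w ^ 2 • D x
      = w ^ 2 • -x ^ 2 • aeval u (derivative P) • -u ^ 2 • D w := by
        rw [hDx, D.map_aeval, hDu]
    _ = ((u * w) ^ 2 * (aeval u (derivative P) * x ^ 2)) • D w := by
        simp only [smul_smul]
        congr 1
        ring
    _ = (aeval u (derivative P) * x ^ 2) • D w := by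
        rw [huw, one_pow, one_mul]

namespace IsCarlitzHom

variable {Fq : Type*} [Field Fq] {q : ℕ} {Φ : Fq[X] → Polynomial (Fq[X])}

protected theorem map_add (hΦ : IsCarlitzHom q Φ) (a b : Fq[X]) : Φ (a + b) = Φ a + Φ b :=
  hΦ.1 a b

protected theorem map_mul (hΦ : IsCarlitzHom q Φ) (a b : Fq[X]) : Φ (a * b) = (Φ a).comp (Φ b) :=
  hΦ.2.2.1 a b

protected theorem map_C (hΦ : IsCarlitzHom q Φ) (c : Fq) : Φ (C c) = C (C c) * X := by
  obtain ⟨-, hsmul, -, hone, -⟩ := hΦ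
  rw [← hone, ← hsmul, mul_one]

protected theorem map_X (hΦ : IsCarlitzHom q Φ) : Φ X = C X * X + X ^ q :=
  hΦ.2.2.2.2

theorem map_X_mul (hΦ : IsCarlitzHom q Φ) (a : Fq[X]) : Φ (X * a) = C X * Φ a + Φ a ^ q := by
  rw [hΦ.map_mul, hΦ.map_X, add_comp, mul_comp, C_comp, X_comp, X_pow_comp]

protected theorem map_zero (hΦ : IsCarlitzHom q Φ) : Φ 0 = 0 := by
  simpa only [C_0, zero_mul] using hΦ.map_C 0

theorem derivative_eq_C (hΦ : IsCarlitzHom q Φ) (hq : (q : Fq) = 0) (f : Fq[X]) :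
    derivative (Φ f) = C f := by
  have hq' : (q : Fq[X][X]) = 0 := by
    simpa only [map_natCast, C_0] using congrArg (fun c : Fq => C (C c)) hq
  induction f using Polynomial.induction_on with
  | C c => rw [hΦ.map_C, derivative_C_mul_X]
  | add a b ha hb => rw [hΦ.map_add, derivative_add, ha, hb, C_add]
  | monomial n c ih =>
    have hstep : (C c * X ^ (n + 1) : Fq[X]) = X * (C c * X ^ n) := by ring
    rw [hstep, hΦ.map_X_mul, derivative_add, derivative_C_mul, ih, derivative_pow, map_natCast, hq',
      zero_mul, zero_mul, add_zero, ← C_mul]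

theorem one_lt (hΦ : IsCarlitzHom q Φ) (hq : (q : Fq) = 0) : 1 < q := by
  have hq0 : q ≠ 0 := by
    rintro rfl
    simpa [hΦ.map_zero] using hΦ.map_X_mul 0
  have hq1 : q ≠ 1 := by
    rintro rfl
    exact one_ne_zero (Nat.cast_one (R := Fq) ▸ hq)
  omega

theorem natDegree_map_X (hΦ : IsCarlitzHom q Φ) (hq : 1 < q) : (Φ X).natDegree = q := by
  have hlt : (C X * X : Fq[X][X]).natDegree < (X ^ q : Fq[X][X]).natDegree := by
    rw [natDegree_X_pow]
    exact ((natDegree_C_mul_le _ _).trans natDegree_X_le).trans_lt hq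
  rw [hΦ.map_X, natDegree_add_eq_right_of_natDegree_lt hlt, natDegree_X_pow]

theorem monic_map_X (hΦ : IsCarlitzHom q Φ) (hq : 1 < q) : (Φ X).Monic := by
  rw [hΦ.map_X]
  refine (monic_X_pow q).add_of_right ?_
  rw [degree_X_pow]
  exact (degree_C_mul_X_le _).trans_lt (mod_cast hq)

theorem natDegree_and_isUnit_leadingCoeff (hΦ : IsCarlitzHom q Φ) (hq : 1 < q) {f : Fq[X]}
    (hf : f ≠ 0) : (Φ f).natDegree = q ^ f.natDegree ∧ IsUnit (Φ f).leadingCoeff := by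
  induction f using Polynomial.recOnHorner with
  | M0 => exact absurd rfl hf
  | MC g c hg0 hc ih =>
    rcases eq_or_ne g 0 with rfl | hg
    · rw [zero_add, hΦ.map_C, natDegree_C_mul_X _ (C_ne_zero.mpr hc), natDegree_C, pow_zero,
        leadingCoeff_C_mul_X]
      exact ⟨rfl, isUnit_C.mpr hc.isUnit⟩
    · obtain ⟨hdeg, hunit⟩ := ih hg
      have hgpos : g.natDegree ≠ 0 := fun h0 =>
        hg (by rw [eq_C_of_natDegree_eq_zero h0, hg0, C_0])
      have hlt : (C (C c) * X : Fq[X][X]).natDegree < (Φ g).natDegree := by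
        rw [hdeg]
        exact ((natDegree_C_mul_le _ _).trans natDegree_X_le).trans_lt (Nat.one_lt_pow hgpos hq)
      rw [hΦ.map_add, hΦ.map_C, natDegree_add_eq_left_of_natDegree_lt hlt, natDegree_add_C,
        leadingCoeff_add_of_degree_lt' (degree_lt_degree hlt)]
      exact ⟨hdeg, hunit⟩
  | MX g hg ih =>
    obtain ⟨hdeg, hunit⟩ := ih hg
    have hpos : (Φ g).natDegree ≠ 0 := by
      rw [hdeg]
      exact (pow_pos (zero_lt_one.trans hq) _).ne'
    rw [mul_comm, hΦ.map_mul, natDegree_comp, leadingCoeff_comp hpos, hΦ.natDegree_map_X hq,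
      (hΦ.monic_map_X hq).leadingCoeff, one_mul, hdeg, natDegree_X_mul hg, pow_succ']
    exact ⟨rfl, hunit.pow q⟩

end IsCarlitzHom

theorem carlitzAtInvW_eq_aeval {Fq R : Type*} [Field Fq] [CommRing R] [Algebra Fq[X] R]
    {Φ : Fq[X] → Polynomial (Fq[X])} {f : Fq[X]} {N : ℕ} (hN : (Φ f).natDegree ≤ N) :
    carlitzAtInvW R Φ f N =
      aeval (HahnSeries.single (-1 : ℤ) (1 : R)) ((Φ f).map (algebraMap Fq[X] R)) := by
  rw [aeval_eq_sum_range' (Nat.lt_succ_of_le (natDegree_map_le.trans hN)), carlitzAtInvW]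
  refine Finset.sum_congr rfl fun j _ => ?_
  rw [coeff_map, HahnSeries.single_pow, Algebra.smul_def, algebraMap_laurentSeries_apply,
    HahnSeries.C_apply, HahnSeries.single_mul_single]
  simp only [zero_add, one_pow, mul_one, nsmul_eq_mul, mul_neg]

/-- Besides `q = #Fq` this allows `q` to be a proper power of `#Fq`; then `Φ` is a Drinfeld
module of higher rank. -/
theorem cusp_kaehler_differential_identity_general {Fq : Type*} [Field Fq] {q : ℕ}
    (hq : (q : Fq) = 0) {Φ : Fq[X] → Polynomial (Fq[X])} (hΦ : IsCarlitzHom q Φ)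
    {R : Type*} [CommRing R] [Algebra Fq[X] R] {f : Fq[X]} (hf : f ≠ 0) :
    IsUnit (carlitzAtInvW R Φ f (q ^ f.natDegree)) ∧
    ∀ x : LaurentSeries R, carlitzAtInvW R Φ f (q ^ f.natDegree) * x = 1 →
      (HahnSeries.single (1 : ℤ) (1 : R)) ^ 2 • KaehlerDifferential.D R (LaurentSeries R) x
        = (algebraMap R (LaurentSeries R) (algebraMap Fq[X] R f) * x ^ 2) •
            KaehlerDifferential.D R (LaurentSeries R) (HahnSeries.single (1 : ℤ) (1 : R)) := by
  obtain ⟨hdeg, hunit⟩ := hΦ.natDegree_and_isUnit_leadingCoeff (hΦ.one_lt hq) hf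
  rw [carlitzAtInvW_eq_aeval hdeg.le]
  refine ⟨isUnit_aeval_single_neg_one (isUnit_leadingCoeff_map _ hunit), fun x hx => ?_⟩
  rw [sq_smul_derivation_inv_aeval _ _ single_neg_one_mul_single_one hx, derivative_map,
    hΦ.derivative_eq_C hq, Polynomial.map_C, aeval_C]

/-- for `f ∈ 𝔽_q[t]` monic of degree `e ≥ 1`, the Laurent series
`Φ^C_f(w^{−1}) ∈ R((w))` is invertible, and its inverse `x` satisfies
`w²·dx = f̄·x²·dw` in `Ω¹_{R((w))/R}`. -/
theorem cusp_kaehler_differential_identity {Fq : Type*} [Field Fq] [Fintype Fq]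
    (q : ℕ) (hq : q = Fintype.card Fq)
    (Φ : Fq[X] → Polynomial (Fq[X])) (hΦ : IsCarlitzHom q Φ)
    {R : Type*} [CommRing R] [Algebra Fq[X] R]
    (f : Fq[X]) (hmon : f.Monic) (e : ℕ) (he : 1 ≤ e) (hdeg : f.natDegree = e) :
    IsUnit (carlitzAtInvW R Φ f (q ^ e)) ∧
    ∀ x : LaurentSeries R, carlitzAtInvW R Φ f (q ^ e) * x = 1 →
      (HahnSeries.single (1 : ℤ) (1 : R)) ^ 2 • KaehlerDifferential.D R (LaurentSeries R) x
        = (algebraMap R (LaurentSeries R) (algebraMap Fq[X] R f) * x ^ 2) •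
            KaehlerDifferential.D R (LaurentSeries R) (HahnSeries.single (1 : ℤ) (1 : R)) := by
  subst hq hdeg
  exact cusp_kaehler_differential_identity_general (FiniteField.cast_card_eq_zero Fq) hΦ
    hmon.ne_zero
end

section
/- Let q be a prime power and 𝔫 ∈ 𝔽_q[t] a nonconstant polynomial that has a monic irreducible factor whose degree is coprime to q − 1. Then the image of 𝔽_q^× in the unit group (𝔽_q[t]/(𝔫))^× admits a complement: there exists a subgroup Δ ≤ (𝔽_q[t]/(𝔫))^× such that Δ ∩ 𝔽_q^× = {1} and Δ·𝔽_q^× = (𝔽_q[t]/(𝔫))^×; equivalently, the natural map Δ → (𝔽_q[t]/(𝔫))^×/𝔽_q^× is an isomorphism. -/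
open Polynomial

/-!
The quotient map `R[X] ⧸ (𝔫) → R[X] ⧸ (𝔮)` followed by the norm down to `R` restricts on the
constants `Rˣ` to `c ↦ c ^ deg 𝔮`. As `deg 𝔮` is coprime to the order of `Rˣ`, this power map is
bijective, so the kernel of the norm on `(R[X] ⧸ (𝔫))ˣ` is a complement of the constants.
-/

lemma isCompl_ker_range_of_bijective_comp {G H K : Type*} [Group G] [Group H] [Group K]
    (f : G →* H) (g : H →* K) (h : Function.Bijective (g.comp f)) :
    IsCompl g.ker f.range where
  disjoint := by
    rw [← Subgroup.comap_eq_ker, MonoidHom.comap_ker, (g.comp f).ker_eq_bot h.injective]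
    exact (f.ker_eq_bot (Function.Injective.of_comp h.injective)).symm
  codisjoint := by
    have hg : Function.Surjective g := Function.Surjective.of_comp h.surjective
    rw [codisjoint_comm, ← Subgroup.map_eq_range_iff, MonoidHom.map_range,
      MonoidHom.range_eq_top.mpr h.surjective, MonoidHom.range_eq_top.mpr hg]

section Norm

variable {R A B : Type*} [CommRing R] [Ring A] [Algebra R A] [Ring B] [Algebra R B]

lemma unitsMap_norm_comp_unitsMap_algebraMap [Module.Free R B] (φ : A →ₐ[R] B) (c : Rˣ) :
    Units.map ((Algebra.norm R).comp (φ : A →* B))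
      (Units.map (algebraMap R A).toMonoidHom c) = c ^ Module.finrank R B := by
  ext
  calc Algebra.norm R (φ (algebraMap R A c))
      = Algebra.norm R (algebraMap R B c) := by rw [φ.commutes]
    _ = (c : R) ^ Module.finrank R B := Algebra.norm_algebraMap _

lemma isCompl_ker_norm_range_algebraMap [Module.Free R B] (φ : A →ₐ[R] B)
    (h : (Nat.card Rˣ).Coprime (Module.finrank R B)) :
    IsCompl (Units.map ((Algebra.norm R).comp (φ : A →* B))).ker
      (Units.map (algebraMap R A).toMonoidHom).range := by
  apply isCompl_ker_range_of_bijective_comp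
  convert h.pow_left_bijective using 1
  exact funext (unitsMap_norm_comp_unitsMap_algebraMap φ)

end Norm

-- For infinite `Rˣ`, `Nat.card Rˣ = 0` and `hcop` says that `𝔮` is linear: `𝔫` has a root in `R`.
theorem constants_complement_exists_general {R : Type*} [CommRing R] {𝔫 𝔮 : R[X]}
    (h𝔮 : 𝔮.Monic) (hdvd : 𝔮 ∣ 𝔫) (hcop : Nat.Coprime 𝔮.natDegree (Nat.card Rˣ)) :
    ∃ Δ : Subgroup (R[X] ⧸ Ideal.span {𝔫})ˣ,
      IsCompl Δ (Units.map (algebraMap R (R[X] ⧸ Ideal.span {𝔫})).toMonoidHom).range := by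
  have := h𝔮.free_quotient
  have hle : Ideal.span {𝔫} ≤ Ideal.span {𝔮} := Ideal.span_singleton_le_span_singleton.mpr hdvd
  refine ⟨_, isCompl_ker_norm_range_algebraMap (Ideal.Quotient.factorₐ R hle) ?_⟩
  nontriviality R
  rwa [finrank_quotient_span_eq_natDegree' h𝔮, Nat.coprime_comm]

/-- if the nonconstant polynomial `𝔫 ∈ 𝔽_q[t]` has a monic irreducible
factor whose degree is coprime to `q − 1`, then the image of `𝔽_q^×` in
`(𝔽_q[t]/(𝔫))^×` admits a complement `Δ`. -/
theorem constants_complement_exists {Fq : Type*} [Field Fq] [Fintype Fq]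
    (q : ℕ) (hq : q = Fintype.card Fq)
    (𝔫 : Fq[X]) (hn : 1 ≤ 𝔫.natDegree)
    (hfac : ∃ 𝔮 : Fq[X], 𝔮.Monic ∧ Irreducible 𝔮 ∧ 𝔮 ∣ 𝔫 ∧
      Nat.Coprime 𝔮.natDegree (q - 1)) :
    ∃ Δ : Subgroup (Fq[X] ⧸ Ideal.span {𝔫})ˣ,
      Δ ⊓ MonoidHom.range
          (Units.map (algebraMap Fq (Fq[X] ⧸ Ideal.span {𝔫})).toMonoidHom) = ⊥ ∧
      Δ ⊔ MonoidHom.range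
          (Units.map (algebraMap Fq (Fq[X] ⧸ Ideal.span {𝔫})).toMonoidHom) = ⊤ := by
  obtain ⟨𝔮, h𝔮, -, hdvd, hcop⟩ := hfac
  obtain ⟨Δ, hΔ⟩ := constants_complement_exists_general h𝔮 hdvd
    (by rwa [Nat.card_units, Nat.card_eq_fintype_card, ← hq])
  exact ⟨Δ, hΔ.inf_eq_bot, hΔ.sup_eq_top⟩
end
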